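/- Let q be a braiding matrix with connected Dynkin diagram such that B_q is finite dimensional, and let B be a pre-Nichols algebra of q with finite GKdim. Let i,j ∈ I_θ with c_{ij} = 0 (equivalently q̃_{ij} = 1), and assume that either ord(q_{ii}) + ord(q_{jj}) > 4, or q_{ii}q_{jj} = 1 and there exists k ∈ I_θ \ {i,j} with q̃_{ik}q̃_{jk} ≠ 1. Then x_{ij} = (ad_c x_i)x_j = 0 in B. -/

import Mathlib

/-
Common framework for formalizing statements from
"Finite GK-dimensional pre-Nichols algebras of (super)modular and unidentified type"
(Angiono, Campagnolo, Sanmarco).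

We work over `ℂ` (an algebraically closed field of characteristic zero).
A braiding matrix is `q : Fin θ → Fin θ → ℂˣ`.  The tensor algebra `T(V)` of the
associated braided vector space of diagonal type is realized as the free algebra
on `Fin θ`.  The braided bialgebra structure on `T(V)` (the braided coproduct,
uniquely determined by the braiding matrix) is packaged in the structure
`BraidedStr`: its fields characterize it uniquely, so quantifying over
`S : BraidedStr θ q` is equivalent to using "the" braided coproduct.

A pre-Nichols algebra of `q` is the quotient `T(V)/I` by an ℕ₀-homogeneous
(two-sided) braided bi-ideal `I` generated in degrees ≥ 2 (`IsPreNicholsIdeal`);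
such an ideal is automatically contained in the defining ideal `Jq` of the
Nichols algebra, which is the largest such ideal.  A statement
"`x = 0` holds in the pre-Nichols algebra `T(V)/I`" is formalized as `x ∈ I`.
-/

open scoped TensorProduct

noncomputable section

namespace PreNicholsPaper

/-- The tensor algebra `T(V)` of the braided vector space of diagonal type of rank `θ`. -/
abbrev TV (θ : ℕ) := FreeAlgebra ℂ (Fin θ)

/-- The generator `x_i` of `T(V)`. -/
def gen (θ : ℕ) (i : Fin θ) : TV θ := FreeAlgebra.ι ℂ i

/-- The monomial `x_{i_1} ⋯ x_{i_n}` associated to a word. -/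
def wordElem (θ : ℕ) (w : List (Fin θ)) : TV θ := (w.map (gen θ)).prod

/-- The multidegree in `ℕ₀^θ` of a word. -/
def degW (θ : ℕ) (w : List (Fin θ)) : Fin θ → ℕ := fun i => w.count i

/-- `α_i`, the `i`-th canonical basis vector of `ℕ₀^θ`. -/
def δ (θ : ℕ) (i : Fin θ) : Fin θ → ℕ := fun k => if k = i then 1 else 0

/-- The bilinear form `ℕ₀^θ × ℕ₀^θ → ℂˣ` attached to the braiding matrix,
`q(α_i, α_j) = q_{ij}`, evaluated in `ℂ`. -/
def qf {θ : ℕ} (q : Fin θ → Fin θ → ℂˣ) (a b : Fin θ → ℕ) : ℂ :=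
  ∏ i : Fin θ, ∏ j : Fin θ, (q i j : ℂ) ^ (a i * b j)

/-- `q̃_{ij} = q_{ij} q_{ji}`. -/
def qtil {θ : ℕ} (q : Fin θ → Fin θ → ℂˣ) (i j : Fin θ) : ℂ := (q i j : ℂ) * (q j i : ℂ)

/-- The braided commutator `[u,v]_c = uv - q(a,b) vu` of elements `u, v`
which are homogeneous of multidegrees `a`, `b` respectively. -/
def brk {θ : ℕ} (q : Fin θ → Fin θ → ℂˣ) (a b : Fin θ → ℕ) (u v : TV θ) : TV θ :=
  u * v - qf q a b • (v * u)

/-- `(ad_c x_i) y = x_i y - q(α_i, b) y x_i` for `y` homogeneous of multidegree `b`. -/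
def ad1 {θ : ℕ} (q : Fin θ → Fin θ → ℂˣ) (i : Fin θ) (b : Fin θ → ℕ) (y : TV θ) : TV θ :=
  brk q (δ θ i) b (gen θ i) y

/-- The iterated braided adjoint `x_{i_1 i_2 ⋯ i_k} = (ad_c x_{i_1}) x_{i_2 ⋯ i_k}`. -/
def xw {θ : ℕ} (q : Fin θ → Fin θ → ℂˣ) : List (Fin θ) → TV θ
  | [] => 1
  | [i] => gen θ i
  | i :: w => ad1 q i (degW θ w) (xw q w)

/-- `(ad_c x_i)^m x_j`. -/
def adpow {θ : ℕ} (q : Fin θ → Fin θ → ℂˣ) (i j : Fin θ) : ℕ → TV θ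
  | 0 => gen θ j
  | m + 1 => ad1 q i (fun k => m * δ θ i k + δ θ j k) (adpow q i j m)

/-- The homogeneous component of total degree `n` of `T(V)`. -/
def homogTot (θ : ℕ) (n : ℕ) : Submodule ℂ (TV θ) :=
  Submodule.span ℂ {x | ∃ w : List (Fin θ), w.length = n ∧ x = wordElem θ w}

/-- The homogeneous component of multidegree `d ∈ ℕ₀^θ` of `T(V)`. -/
def homogD (θ : ℕ) (d : Fin θ → ℕ) : Submodule ℂ (TV θ) :=
  Submodule.span ℂ {x | ∃ w : List (Fin θ), degW θ w = d ∧ x = wordElem θ w}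

/-- The braided bialgebra structure on `T(V)` determined by the braiding matrix `q`:
the braided coproduct `Δ` together with the multiplication `mulB` of the braided
tensor product `T(V) ⊗ T(V)`.  These axioms determine `Δ` and `mulB` uniquely. -/
structure BraidedStr (θ : ℕ) (q : Fin θ → Fin θ → ℂˣ) where
  Δ : TV θ →ₗ[ℂ] TensorProduct ℂ (TV θ) (TV θ)
  mulB : TensorProduct ℂ (TV θ) (TV θ) →ₗ[ℂ]
    TensorProduct ℂ (TV θ) (TV θ) →ₗ[ℂ] TensorProduct ℂ (TV θ) (TV θ)
  mulB_spec : ∀ (a d : TV θ) (wb wc : List (Fin θ)),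
    mulB (a ⊗ₜ[ℂ] wordElem θ wb) (wordElem θ wc ⊗ₜ[ℂ] d)
      = qf q (degW θ wb) (degW θ wc) • ((a * wordElem θ wc) ⊗ₜ[ℂ] (wordElem θ wb * d))
  Δ_one : Δ 1 = 1 ⊗ₜ[ℂ] 1
  Δ_gen : ∀ i, Δ (gen θ i) = gen θ i ⊗ₜ[ℂ] 1 + 1 ⊗ₜ[ℂ] gen θ i
  Δ_mul : ∀ u v : TV θ, Δ (u * v) = mulB (Δ u) (Δ v)

variable {θ : ℕ} {q : Fin θ → Fin θ → ℂˣ}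

/-- `x` is a primitive element. -/
def IsPrimitiveIn (S : BraidedStr θ q) (x : TV θ) : Prop :=
  S.Δ x = x ⊗ₜ[ℂ] (1 : TV θ) + (1 : TV θ) ⊗ₜ[ℂ] x

/-- The submodule `I ⊗ T(V) + T(V) ⊗ J` of `T(V) ⊗ T(V)`. -/
def mixedPair (I J : Submodule ℂ (TV θ)) : Submodule ℂ (TensorProduct ℂ (TV θ) (TV θ)) :=
  Submodule.span ℂ
    ({x | ∃ a b : TV θ, a ∈ I ∧ x = a ⊗ₜ[ℂ] b} ∪ {x | ∃ a b : TV θ, b ∈ J ∧ x = a ⊗ₜ[ℂ] b})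

/-- The submodule `I ⊗ T(V) + T(V) ⊗ I` of `T(V) ⊗ T(V)`. -/
def mixedSub (I : Submodule ℂ (TV θ)) : Submodule ℂ (TensorProduct ℂ (TV θ) (TV θ)) :=
  mixedPair I I

/-- `I` is the defining ideal of a pre-Nichols algebra of `q`：an ℕ₀-homogeneous
two-sided (bi-)ideal of `T(V)` generated in degrees `≥ 2` which is also a coideal.
Such an ideal is automatically contained in the defining ideal `Jq` of the Nichols
algebra, and the pre-Nichols algebra is the quotient `T(V)/I`. -/
structure IsPreNicholsIdeal (S : BraidedStr θ q) (I : Submodule ℂ (TV θ)) : Prop where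
  mul_left : ∀ a x : TV θ, x ∈ I → a * x ∈ I
  mul_right : ∀ a x : TV θ, x ∈ I → x * a ∈ I
  homog_ge2 : I = Submodule.span ℂ {x | x ∈ I ∧ ∃ n, 2 ≤ n ∧ x ∈ homogTot θ n}
  coideal : ∀ x ∈ I, S.Δ x ∈ mixedSub I

/-- The defining ideal `J_q` of the Nichols algebra `B_q = T(V)/J_q`:
the maximal homogeneous braided Hopf ideal generated in degrees `≥ 2`. -/
def Jq (S : BraidedStr θ q) : Submodule ℂ (TV θ) := sSup {I | IsPreNicholsIdeal S I}

/-- The standard filtration of `T(V)`: span of words of length `≤ n`. -/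
def Wfil (θ : ℕ) (n : ℕ) : Submodule ℂ (TV θ) :=
  Submodule.span ℂ {x | ∃ w : List (Fin θ), w.length ≤ n ∧ x = wordElem θ w}

/-- The quotient algebra `T(V)/I` has finite Gelfand–Kirillov dimension, i.e.
the standard filtration of the (finitely generated) quotient has polynomial growth. -/
def FinGK (I : Submodule ℂ (TV θ)) : Prop :=
  ∃ C d : ℕ, ∀ n : ℕ, Module.finrank ℂ ((Wfil θ n).map I.mkQ) ≤ C * (n + 1) ^ d

/-- The Gelfand–Kirillov dimension of the quotient algebra `T(V)/I`. -/
def GKdim (I : Submodule ℂ (TV θ)) : ℝ :=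
  Filter.limsup
    (fun n : ℕ => Real.log (Module.finrank ℂ ((Wfil θ n).map I.mkQ)) / Real.log n)
    Filter.atTop

/-- `I` defines an eminent pre-Nichols algebra: it is a finite-GKdim pre-Nichols
algebra, and every finite-GKdim pre-Nichols algebra of `q` is a quotient of it. -/
def IsEminent (S : BraidedStr θ q) (I : Submodule ℂ (TV θ)) : Prop :=
  IsPreNicholsIdeal S I ∧ FinGK I ∧
    ∀ I' : Submodule ℂ (TV θ), IsPreNicholsIdeal S I' → FinGK I' → I ≤ I'

/-- The Dynkin diagram of the braiding matrix `q`: vertices `Fin θ`, an edge between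
`i ≠ j` iff `q̃_{ij} ≠ 1`. -/
def dynkin {θ : ℕ} (q : Fin θ → Fin θ → ℂˣ) : SimpleGraph (Fin θ) :=
  SimpleGraph.fromRel (fun i j => qtil q i j ≠ 1)

/-- The quantum number `(m)_t = 1 + t + ⋯ + t^{m-1}`. -/
def qnum (t : ℂ) (m : ℕ) : ℂ := ∑ k ∈ Finset.range m, t ^ k

/-- The set of `n ∈ ℕ₀` such that `(n+1)_{q_{ii}} (1 - q_{ii}^n q̃_{ij}) = 0`,
i.e. such that `(ad_c x_i)^{n+1} x_j = 0` in the Nichols algebra.  The entry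
`c_{ij}` of the generalized Cartan matrix is `-(min of this set)`. -/
def cSet {θ : ℕ} (q : Fin θ → Fin θ → ℂˣ) (i j : Fin θ) : Set ℕ :=
  {n | qnum (q i i : ℂ) (n + 1) * (1 - (q i i : ℂ) ^ n * qtil q i j) = 0}

/-- The generalized Cartan matrix of `q`. -/
def cij {θ : ℕ} (q : Fin θ → Fin θ → ℂˣ) (i j : Fin θ) : ℤ :=
  if i = j then 2 else -(Int.ofNat (sInf (cSet q i j)))

/-- All entries `c_{ij}` are defined at the vertex `i`. -/
def reflectable {θ : ℕ} (q : Fin θ → Fin θ → ℂˣ) (i : Fin θ) : Prop :=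
  ∀ j, j ≠ i → (cSet q i j).Nonempty

/-- The `i`-th reflection of the braiding matrix:
`(r_i q)_{jk} = q(s_i α_j, s_i α_k)` where `s_i α_j = α_j - c_{ij} α_i`. -/
def reflectMat {θ : ℕ} (q : Fin θ → Fin θ → ℂˣ) (i : Fin θ) : Fin θ → Fin θ → ℂˣ :=
  fun j k =>
    q j k * q j i ^ (-(cij q i k)) * q i k ^ (-(cij q i j)) * q i i ^ (cij q i j * cij q i k)

/-- The reflection `s_i` acting on `ℤ^θ`. -/
def sRefl {θ : ℕ} (q : Fin θ → Fin θ → ℂˣ) (i : Fin θ) (β : Fin θ → ℤ) : Fin θ → ℤ :=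
  fun k => β k - (if k = i then ∑ j, cij q i j * β j else 0)

/-- The (real) roots of `q`, together with the base points of the Weyl groupoid at
which they live: pairs `(q', β)` obtained from a simple root of `q` by iterated
reflections. -/
inductive ReachRoot {θ : ℕ} (q₀ : Fin θ → Fin θ → ℂˣ) :
    (Fin θ → Fin θ → ℂˣ) → (Fin θ → ℤ) → Prop
  | simple (j : Fin θ) : ReachRoot q₀ q₀ (fun k => if k = j then 1 else 0)
  | reflect {q' : Fin θ → Fin θ → ℂˣ} {β : Fin θ → ℤ} (i : Fin θ) :
      ReachRoot q₀ q' β → ReachRoot q₀ (reflectMat q' i) (sRefl q' i β)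

/-- `q` has a finite (generalized) root system: all reflections are defined at every
point of the Weyl groupoid, and the set of roots so obtained is finite. -/
def FiniteRootSystem {θ : ℕ} (q : Fin θ → Fin θ → ℂˣ) : Prop :=
  (∀ q' i, (∃ β, ReachRoot q q' β) → reflectable q' i) ∧
    Set.Finite {β : Fin θ → ℤ | ∃ q', ReachRoot q q' β}

/-- Conjecture (Andruskiewitsch–Angiono–Heckenberger): the root system of a Nichols
algebra of diagonal type with finite Gelfand–Kirillov dimension is finite. -/
def AAH : Prop :=
  ∀ (θ : ℕ) (q : Fin θ → Fin θ → ℂˣ) (S : BraidedStr θ q), FinGK (Jq S) → FiniteRootSystem q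

/-- The two-sided ideal of `T(V)` generated by a set. -/
def idealGen (θ : ℕ) (s : Set (TV θ)) : Submodule ℂ (TV θ) :=
  Submodule.span ℂ {x | ∃ g ∈ s, ∃ a b : TV θ, x = a * g * b}

end PreNicholsPaper

namespace PreNicholsPaper

section Words

variable {θ : ℕ}

theorem wordElem_nil : wordElem θ [] = 1 := rfl

theorem wordElem_append (u v : List (Fin θ)) :
    wordElem θ (u ++ v) = wordElem θ u * wordElem θ v := by
  simp [wordElem]

theorem wordElem_singleton (l : Fin θ) : wordElem θ [l] = gen θ l := by
  simp [wordElem]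

/-- The basis of `T(V)` consisting of the words. -/
def wordBasis (θ : ℕ) : Module.Basis (List (Fin θ)) ℂ (TV θ) :=
  (FreeAlgebra.basisFreeMonoid ℂ (Fin θ)).reindex FreeMonoid.toList

theorem wordBasis_apply (w : List (Fin θ)) : wordBasis θ w = wordElem θ w := by
  simp [wordBasis, FreeAlgebra.basisFreeMonoid, FreeAlgebra.equivMonoidAlgebraFreeMonoid,
    FreeMonoid.lift_apply, wordElem]
  rfl

/-- The coefficient of the word `v`. -/
def coef (v : List (Fin θ)) : TV θ →ₗ[ℂ] ℂ := (wordBasis θ).coord v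

theorem coef_wordElem (v w : List (Fin θ)) :
    coef v (wordElem θ w) = if w = v then 1 else 0 := by
  rw [coef, ← wordBasis_apply, Module.Basis.coord_apply, Module.Basis.repr_self,
    Finsupp.single_apply]

/-- A subspace of `T(V)` containing `1` and stable under right multiplication by the generators
is everything. -/
theorem mem_of_mul_gen (p : Submodule ℂ (TV θ)) (h1 : (1 : TV θ) ∈ p)
    (hmul : ∀ b ∈ p, ∀ l, b * gen θ l ∈ p) (x : TV θ) : x ∈ p := by
  have hw : ∀ w : List (Fin θ), wordElem θ w ∈ p := by
    intro w
    induction w using List.reverseRecOn with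
    | nil => exact h1
    | append_singleton w l ih =>
      rw [wordElem_append, wordElem_singleton]
      exact hmul _ ih l
  have : Submodule.span ℂ (Set.range (wordBasis θ)) ≤ p := by
    rw [Submodule.span_le]
    rintro _ ⟨w, rfl⟩
    rw [wordBasis_apply]
    exact hw w
  rw [Module.Basis.span_eq] at this
  exact this trivial

/-- Linear maps out of `T(V)` agree if they agree at `1` and agreement propagates under right
multiplication by the generators. -/
theorem eq_of_mul_gen {M : Type*} [AddCommGroup M] [Module ℂ M] (f g : TV θ →ₗ[ℂ] M)
    (h1 : f 1 = g 1) (hmul : ∀ b l, f b = g b → f (b * gen θ l) = g (b * gen θ l)) (x : TV θ) :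
    f x = g x :=
  mem_of_mul_gen (LinearMap.eqLocus f g) h1 (fun b hb l => hmul b l hb) x

theorem eq_of_wordElem {M : Type*} [AddCommGroup M] [Module ℂ M] {f g : TV θ →ₗ[ℂ] M}
    (h : ∀ w, f (wordElem θ w) = g (wordElem θ w)) : f = g :=
  (wordBasis θ).ext fun w => by rw [wordBasis_apply]; exact h w

theorem coef_one (v : List (Fin θ)) : coef v (1 : TV θ) = if v = [] then 1 else 0 := by
  rw [← wordElem_nil, coef_wordElem]
  simp [eq_comm]

theorem coef_nil_mul_gen (b : TV θ) (l : Fin θ) : coef [] (b * gen θ l) = 0 := by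
  have : coef [] ∘ₗ LinearMap.mulRight ℂ (gen θ l) = 0 := eq_of_wordElem fun w => by
    simp [← wordElem_singleton, ← wordElem_append, coef_wordElem]
  exact LinearMap.congr_fun this b

theorem coef_append_mul_gen (v : List (Fin θ)) (k : Fin θ) (b : TV θ) (l : Fin θ) :
    coef (v ++ [k]) (b * gen θ l) = if k = l then coef v b else 0 := by
  have : coef (v ++ [k]) ∘ₗ LinearMap.mulRight ℂ (gen θ l) = if k = l then coef v else 0 :=
    eq_of_wordElem fun w => by
      by_cases h : k = l
      · subst h
        simp [← wordElem_singleton, ← wordElem_append, coef_wordElem]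
      · have h' : l ≠ k := fun e => h e.symm
        simp [← wordElem_singleton, ← wordElem_append, coef_wordElem, h, h']
  have := LinearMap.congr_fun this b
  split_ifs at this ⊢ <;> simpa using this

theorem coef_single_mul_gen (k : Fin θ) (b : TV θ) (l : Fin θ) :
    coef [k] (b * gen θ l) = if k = l then coef [] b else 0 :=
  coef_append_mul_gen [] k b l

theorem coef_pair_mul_gen (m k : Fin θ) (b : TV θ) (l : Fin θ) :
    coef [m, k] (b * gen θ l) = if k = l then coef [m] b else 0 :=
  coef_append_mul_gen [m] k b l

/-- The algebra endomorphism of `T(V)` scaling the generator `x_m` by `c m`. -/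
def scale (c : Fin θ → ℂ) : TV θ →ₐ[ℂ] TV θ := FreeAlgebra.lift ℂ fun m => c m • gen θ m

theorem scale_gen (c : Fin θ → ℂ) (m : Fin θ) : scale c (gen θ m) = c m • gen θ m := by
  simp [scale, gen]

theorem coef_nil_scale (c : Fin θ → ℂ) (b : TV θ) : coef [] (scale c b) = coef [] b := by
  refine eq_of_mul_gen (coef [] ∘ₗ (scale c).toLinearMap) (coef []) (by simp) ?_ b
  intro b l _
  simp [scale_gen, coef_nil_mul_gen]

theorem coef_append_scale (c : Fin θ → ℂ) (v : List (Fin θ)) (k : Fin θ) (a : ℂ)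
    (h : ∀ b, coef v (scale c b) = a * coef v b) (b : TV θ) :
    coef (v ++ [k]) (scale c b) = (a * c k) * coef (v ++ [k]) b := by
  refine eq_of_mul_gen (coef (v ++ [k]) ∘ₗ (scale c).toLinearMap) ((a * c k) • coef (v ++ [k]))
    (by simp [coef_one]) ?_ b
  intro b l _
  simp only [LinearMap.comp_apply, AlgHom.toLinearMap_apply, map_mul, scale_gen,
    mul_smul_comm, map_smul, coef_append_mul_gen, LinearMap.smul_apply, smul_eq_mul]
  split_ifs with hk
  · rw [h, hk]; ring
  · simp

theorem coef_single_scale (c : Fin θ → ℂ) (k : Fin θ) (b : TV θ) :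
    coef [k] (scale c b) = c k * coef [k] b := by
  have := coef_append_scale c [] k 1 (fun b => by rw [coef_nil_scale, one_mul]) b
  simpa using this

theorem coef_pair_scale (c : Fin θ → ℂ) (m k : Fin θ) (b : TV θ) :
    coef [m, k] (scale c b) = (c m * c k) * coef [m, k] b :=
  coef_append_scale c [m] k (c m) (coef_single_scale c m) b

end Words

section Form

variable {θ : ℕ} (q : Fin θ → Fin θ → ℂˣ)

theorem qf_add_left (a b c : Fin θ → ℕ) : qf q (a + b) c = qf q a c * qf q b c := by
  simp [qf, ← Finset.prod_mul_distrib, add_mul, pow_add]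

theorem qf_add_right (a b c : Fin θ → ℕ) : qf q a (b + c) = qf q a b * qf q a c := by
  simp [qf, ← Finset.prod_mul_distrib, mul_add, pow_add]

theorem qf_zero_left (c : Fin θ → ℕ) : qf q 0 c = 1 := by simp [qf]

theorem qf_zero_right (c : Fin θ → ℕ) : qf q c 0 = 1 := by simp [qf]

theorem qf_delta (k l : Fin θ) : qf q (δ θ k) (δ θ l) = q k l := by
  unfold qf
  rw [Finset.prod_eq_single k, Finset.prod_eq_single l]
  · simp [δ]
  · intro b _ hb; simp [δ, hb]
  · simp
  · intro b _ hb; simp [δ, hb]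
  · simp

theorem degW_nil : degW θ [] = 0 := by ext; simp [degW]

theorem degW_append (u v : List (Fin θ)) : degW θ (u ++ v) = degW θ u + degW θ v := by
  ext; simp [degW]

theorem degW_singleton (l : Fin θ) : degW θ [l] = δ θ l := by
  ext k
  by_cases h : l = k
  · simp [degW, δ, h]
  · simp [degW, δ, h, Ne.symm h]

theorem scale_wordElem (l : Fin θ) (w : List (Fin θ)) :
    scale (fun m => (q m l : ℂ)) (wordElem θ w) = qf q (degW θ w) (δ θ l) • wordElem θ w := by
  induction w using List.reverseRecOn with
  | nil => simp [wordElem_nil, degW_nil, qf_zero_left]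
  | append_singleton w m ih =>
    rw [wordElem_append, degW_append, map_mul, ih, wordElem_singleton, scale_gen, qf_add_left,
      degW_singleton, qf_delta, smul_mul_smul_comm]

theorem xw_pair (i j : Fin θ) :
    xw q [i, j] = gen θ i * gen θ j - (q i j : ℂ) • (gen θ j * gen θ i) := by
  simp [xw, ad1, brk, degW_singleton, qf_delta]

end Form

section Derivations

variable {θ : ℕ} {q : Fin θ → Fin θ → ℂˣ} (S : BraidedStr θ q)

/-- Left translation by the braiding character: `y ↦ q(α_l, deg y) y`. -/
def sigma (q : Fin θ → Fin θ → ℂˣ) (l : Fin θ) : TV θ →ₐ[ℂ] TV θ := scale fun m => (q l m : ℂ)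

/-- Right translation by the braiding character: `y ↦ q(deg y, α_l) y`. -/
def rho (q : Fin θ → Fin θ → ℂˣ) (l : Fin θ) : TV θ →ₐ[ℂ] TV θ := scale fun m => (q m l : ℂ)

theorem sigma_gen (l m : Fin θ) : sigma q l (gen θ m) = (q l m : ℂ) • gen θ m := scale_gen _ _

theorem rho_gen (l m : Fin θ) : rho q l (gen θ m) = (q m l : ℂ) • gen θ m := scale_gen _ _

theorem comul_mul_gen (b : TV θ) (l : Fin θ) :
    S.Δ (b * gen θ l) =
      TensorProduct.map (LinearMap.mulRight ℂ (gen θ l)) (rho q l).toLinearMap (S.Δ b) +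
      TensorProduct.map LinearMap.id (LinearMap.mulRight ℂ (gen θ l)) (S.Δ b) := by
  rw [S.Δ_mul, S.Δ_gen]
  have key : S.mulB.flip (gen θ l ⊗ₜ[ℂ] 1 + 1 ⊗ₜ[ℂ] gen θ l) =
      TensorProduct.map (LinearMap.mulRight ℂ (gen θ l)) (rho q l).toLinearMap +
      TensorProduct.map LinearMap.id (LinearMap.mulRight ℂ (gen θ l)) := by
    apply TensorProduct.ext
    refine LinearMap.ext fun a => eq_of_wordElem fun w => ?_
    have h1 := S.mulB_spec a 1 w [l]
    have h2 := S.mulB_spec a (gen θ l) w []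
    rw [wordElem_singleton, degW_singleton] at h1
    rw [wordElem_nil, degW_nil, qf_zero_right] at h2
    simp only [LinearMap.compr₂ₛₗ_apply, TensorProduct.mk_apply, LinearMap.flip_apply, map_add, h1,
      h2, LinearMap.add_apply, TensorProduct.map_tmul, LinearMap.mulRight_apply, rho,
      AlgHom.toLinearMap_apply, scale_wordElem, TensorProduct.tmul_smul, LinearMap.id_apply,
      mul_one, one_smul]
  exact LinearMap.congr_fun key (S.Δ b)

/-- The operator `(id ⊗ f) Δ` on `T(V)`. -/
def act (f : TV θ →ₗ[ℂ] ℂ) : TV θ →ₗ[ℂ] TV θ :=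
  (TensorProduct.rid ℂ (TV θ)).toLinearMap ∘ₗ LinearMap.lTensor (TV θ) f ∘ₗ S.Δ

/-- The operator `(f ⊗ id) Δ` on `T(V)`. -/
def actLeft (f : TV θ →ₗ[ℂ] ℂ) : TV θ →ₗ[ℂ] TV θ :=
  (TensorProduct.lid ℂ (TV θ)).toLinearMap ∘ₗ LinearMap.rTensor (TV θ) f ∘ₗ S.Δ

theorem act_one (f : TV θ →ₗ[ℂ] ℂ) : act S f 1 = f 1 • 1 := by
  simp [act, S.Δ_one]

theorem actLeft_one (f : TV θ →ₗ[ℂ] ℂ) : actLeft S f 1 = f 1 • 1 := by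
  simp [actLeft, S.Δ_one]

theorem act_mul_gen (f : TV θ →ₗ[ℂ] ℂ) (b : TV θ) (l : Fin θ) :
    act S f (b * gen θ l) =
      act S (f ∘ₗ (rho q l).toLinearMap) b * gen θ l +
      act S (f ∘ₗ LinearMap.mulRight ℂ (gen θ l)) b := by
  simp only [act, LinearMap.comp_apply, comul_mul_gen, map_add]
  congr 1
  · induction S.Δ b with
    | zero => simp
    | tmul x y => simp
    | add x y hx hy => simp only [map_add, hx, hy, add_mul]
  · induction S.Δ b with
    | zero => simp
    | tmul x y => simp
    | add x y hx hy => simp only [map_add, hx, hy]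

theorem actLeft_mul_gen (f : TV θ →ₗ[ℂ] ℂ) (b : TV θ) (l : Fin θ) :
    actLeft S f (b * gen θ l) =
      rho q l (actLeft S (f ∘ₗ LinearMap.mulRight ℂ (gen θ l)) b) +
      actLeft S f b * gen θ l := by
  simp only [actLeft, LinearMap.comp_apply, comul_mul_gen, map_add]
  congr 1
  · induction S.Δ b with
    | zero => simp
    | tmul x y => simp
    | add x y hx hy => simp only [map_add, hx, hy]
  · induction S.Δ b with
    | zero => simp
    | tmul x y => simp
    | add x y hx hy => simp only [map_add, hx, hy, add_mul]

theorem act_smul (c : ℂ) (f : TV θ →ₗ[ℂ] ℂ) : act S (c • f) = c • act S f := by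
  simp [act, LinearMap.lTensor_smul, LinearMap.smul_comp, LinearMap.comp_smul]

theorem act_add (f g : TV θ →ₗ[ℂ] ℂ) : act S (f + g) = act S f + act S g := by
  simp [act, LinearMap.lTensor_add, LinearMap.add_comp, LinearMap.comp_add]

theorem act_zero : act S 0 = 0 := by
  simp [act]

theorem actLeft_zero : actLeft S 0 = 0 := by
  simp [actLeft]

/-- The counit law on the right. -/
theorem act_counit (b : TV θ) : act S (coef []) b = b := by
  refine eq_of_mul_gen (act S (coef [])) LinearMap.id (by simp [act_one, coef_one]) ?_ b
  intro b l h
  have h1 : coef [] ∘ₗ (rho q l).toLinearMap = coef [] := LinearMap.ext (coef_nil_scale _)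
  have h2 : coef [] ∘ₗ LinearMap.mulRight ℂ (gen θ l) = 0 :=
    LinearMap.ext fun b => coef_nil_mul_gen b l
  rw [act_mul_gen, h1, h2, act_zero, h]
  simp

/-- The counit law on the left. -/
theorem actLeft_counit (b : TV θ) : actLeft S (coef []) b = b := by
  refine eq_of_mul_gen (actLeft S (coef [])) LinearMap.id (by simp [actLeft_one, coef_one]) ?_ b
  intro b l h
  have h2 : coef [] ∘ₗ LinearMap.mulRight ℂ (gen θ l) = 0 :=
    LinearMap.ext fun b => coef_nil_mul_gen b l
  rw [actLeft_mul_gen, h2, actLeft_zero, h]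
  simp

/-- The right skew derivation `∂_k` of `T(V)`. -/
def D (k : Fin θ) : TV θ →ₗ[ℂ] TV θ := act S (coef [k])

/-- The operator dual to the word `x_m x_n`. -/
def D₂ (m n : Fin θ) : TV θ →ₗ[ℂ] TV θ := act S (coef [m, n])

theorem D_one (k : Fin θ) : D S k 1 = 0 := by
  simp [D, act_one, coef_one]

theorem D₂_one (m n : Fin θ) : D₂ S m n 1 = 0 := by
  simp [D₂, act_one, coef_one]

theorem D_mul_gen (k : Fin θ) (b : TV θ) (l : Fin θ) :
    D S k (b * gen θ l) = (q k l : ℂ) • (D S k b * gen θ l) + if k = l then b else 0 := by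
  have h1 : coef [k] ∘ₗ (rho q l).toLinearMap = (q k l : ℂ) • coef [k] :=
    LinearMap.ext (coef_single_scale _ k)
  have h2 : coef [k] ∘ₗ LinearMap.mulRight ℂ (gen θ l) = if k = l then coef [] else 0 :=
    LinearMap.ext fun b => by
      have := coef_single_mul_gen k b l
      split_ifs at this ⊢ <;> simpa using this
  rw [D, act_mul_gen, h1, h2, act_smul]
  split_ifs <;> simp [act_counit, act_zero]

theorem D₂_mul_gen (m n : Fin θ) (b : TV θ) (l : Fin θ) :
    D₂ S m n (b * gen θ l) =
      ((q m l : ℂ) * q n l) • (D₂ S m n b * gen θ l) + if n = l then D S m b else 0 := by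
  have h1 : coef [m, n] ∘ₗ (rho q l).toLinearMap = ((q m l : ℂ) * q n l) • coef [m, n] :=
    LinearMap.ext (coef_pair_scale _ m n)
  have h2 : coef [m, n] ∘ₗ LinearMap.mulRight ℂ (gen θ l) = if n = l then coef [m] else 0 :=
    LinearMap.ext fun b => by
      have := coef_pair_mul_gen m n b l
      split_ifs at this ⊢ <;> simpa using this
  rw [D₂, act_mul_gen, h1, h2, act_smul]
  split_ifs <;> simp [D, act_zero]

theorem D_gen (k l : Fin θ) : D S k (gen θ l) = if k = l then 1 else 0 := by
  have := D_mul_gen S k 1 l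
  simpa [D_one] using this

theorem D₂_gen (m n l : Fin θ) : D₂ S m n (gen θ l) = 0 := by
  have := D₂_mul_gen S m n 1 l
  simpa [D_one, D₂_one] using this

theorem D_mul (k : Fin θ) (a b : TV θ) :
    D S k (a * b) = a * D S k b + D S k a * sigma q k b := by
  refine eq_of_mul_gen (D S k ∘ₗ LinearMap.mulLeft ℂ a)
    (LinearMap.mulLeft ℂ a ∘ₗ D S k + LinearMap.mulLeft ℂ (D S k a) ∘ₗ (sigma q k).toLinearMap)
    (by simp [D_one]) ?_ b
  intro b l h
  simp only [LinearMap.comp_apply, LinearMap.mulLeft_apply, LinearMap.add_apply,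
    AlgHom.toLinearMap_apply] at h ⊢
  rw [← mul_assoc, D_mul_gen, h, D_mul_gen, map_mul, sigma_gen]
  split_ifs <;> simp [mul_add, add_mul, mul_assoc] <;> abel

theorem D₂_mul (m n : Fin θ) (a b : TV θ) :
    D₂ S m n (a * b) = a * D₂ S m n b + D S m a * sigma q m (D S n b) +
      D₂ S m n a * sigma q m (sigma q n b) := by
  refine eq_of_mul_gen (D₂ S m n ∘ₗ LinearMap.mulLeft ℂ a)
    (LinearMap.mulLeft ℂ a ∘ₗ D₂ S m n +
      LinearMap.mulLeft ℂ (D S m a) ∘ₗ (sigma q m).toLinearMap ∘ₗ D S n +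
      LinearMap.mulLeft ℂ (D₂ S m n a) ∘ₗ (sigma q m).toLinearMap ∘ₗ (sigma q n).toLinearMap)
    (by simp [D₂_one, D_one]) ?_ b
  intro b l h
  simp only [LinearMap.comp_apply, LinearMap.mulLeft_apply, LinearMap.add_apply,
    AlgHom.toLinearMap_apply] at h ⊢
  rw [← mul_assoc, D₂_mul_gen, h, D₂_mul_gen, D_mul_gen, D_mul, map_mul, sigma_gen]
  split_ifs <;>
    simp only [mul_add, add_mul, mul_assoc, map_add, map_mul, map_smul, sigma_gen, smul_add,
      mul_smul_comm, smul_smul, mul_comm (q n l : ℂ), add_zero] <;> abel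

theorem D_scale (c : Fin θ → ℂ) (k : Fin θ) (b : TV θ) :
    D S k (scale c b) = c k • scale c (D S k b) := by
  refine eq_of_mul_gen (D S k ∘ₗ (scale c).toLinearMap) (c k • (scale c).toLinearMap ∘ₗ D S k)
    (by simp [D_one]) ?_ b
  intro b l h
  simp only [LinearMap.comp_apply, LinearMap.smul_apply, AlgHom.toLinearMap_apply] at h ⊢
  rw [map_mul, scale_gen, mul_smul_comm, map_smul, D_mul_gen, D_mul_gen, h]
  split_ifs with hk
  · subst hk
    simp only [map_add, map_smul, map_mul, scale_gen, smul_add, mul_smul_comm, smul_mul_assoc]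
  · simp only [map_add, map_smul, map_mul, scale_gen, smul_add, mul_smul_comm, smul_mul_assoc,
      map_zero]
    module

/-- Coassociativity, in the form `(id ⊗ ∂_k) Δ = Δ ∂_k`. -/
theorem lTensor_D_comul (k : Fin θ) (b : TV θ) :
    LinearMap.lTensor (TV θ) (D S k) (S.Δ b) = S.Δ (D S k b) := by
  refine eq_of_mul_gen (LinearMap.lTensor (TV θ) (D S k) ∘ₗ S.Δ) (S.Δ ∘ₗ D S k)
    (by simp [S.Δ_one, D_one]) ?_ b
  intro b l h
  simp only [LinearMap.comp_apply] at h ⊢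
  have hadd : S.Δ (if k = l then b else 0) = if k = l then S.Δ b else 0 := by
    split_ifs <;> simp
  rw [D_mul_gen, map_add, hadd, map_smul, comul_mul_gen, comul_mul_gen, ← h]
  generalize S.Δ b = t
  induction t with
  | zero => simp
  | tmul x y =>
    simp only [map_add, TensorProduct.map_tmul, LinearMap.mulRight_apply, LinearMap.id_apply,
      LinearMap.lTensor_tmul, AlgHom.toLinearMap_apply, rho, D_scale, D_mul_gen]
    split_ifs <;> simp [TensorProduct.tmul_add, TensorProduct.tmul_smul] <;> abel
  | add x y hx hy =>
    simp only [map_add, smul_add] at hx hy ⊢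
    have hite : (if k = l then x + y else 0) = (if k = l then x else 0) + if k = l then y else 0 := by
      split_ifs <;> simp
    rw [hite]
    calc _ = _ := add_add_add_comm _ _ _ _
      _ = _ := by rw [hx, hy]
      _ = _ := by abel

end Derivations

section Existence

variable {θ : ℕ} (q : Fin θ → Fin θ → ℂˣ)

/-- The basis of `T(V) ⊗ T(V)` consisting of tensors of words. -/
def wordBasis₂ (θ : ℕ) : Module.Basis (List (Fin θ) × List (Fin θ)) ℂ (TV θ ⊗[ℂ] TV θ) :=
  (wordBasis θ).tensorProduct (wordBasis θ)

theorem wordBasis₂_apply (p : List (Fin θ) × List (Fin θ)) :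
    wordBasis₂ θ p = wordElem θ p.1 ⊗ₜ[ℂ] wordElem θ p.2 := by
  rw [wordBasis₂, Module.Basis.tensorProduct_apply', wordBasis_apply, wordBasis_apply]

/-- The multiplication of the braided tensor square of `T(V)`. -/
def braidedMul : TV θ ⊗[ℂ] TV θ →ₗ[ℂ] TV θ ⊗[ℂ] TV θ →ₗ[ℂ] TV θ ⊗[ℂ] TV θ :=
  (wordBasis₂ θ).constr ℂ fun p => (wordBasis₂ θ).constr ℂ fun r =>
    qf q (degW θ p.2) (degW θ r.1) •
      ((wordElem θ p.1 * wordElem θ r.1) ⊗ₜ[ℂ] (wordElem θ p.2 * wordElem θ r.2))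

theorem braidedMul_words (a b c d : List (Fin θ)) :
    braidedMul q (wordElem θ a ⊗ₜ[ℂ] wordElem θ b) (wordElem θ c ⊗ₜ[ℂ] wordElem θ d) =
      qf q (degW θ b) (degW θ c) •
        ((wordElem θ a * wordElem θ c) ⊗ₜ[ℂ] (wordElem θ b * wordElem θ d)) := by
  rw [← wordBasis₂_apply (a, b), ← wordBasis₂_apply (c, d), braidedMul, Module.Basis.constr_basis,
    Module.Basis.constr_basis]

theorem braidedMul_spec (a d : TV θ) (b c : List (Fin θ)) :
    braidedMul q (a ⊗ₜ[ℂ] wordElem θ b) (wordElem θ c ⊗ₜ[ℂ] d) =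
      qf q (degW θ b) (degW θ c) • ((a * wordElem θ c) ⊗ₜ[ℂ] (wordElem θ b * d)) := by
  have h : (braidedMul q).compl₁₂ ((TensorProduct.mk ℂ (TV θ) (TV θ)).flip (wordElem θ b))
      (TensorProduct.mk ℂ (TV θ) (TV θ) (wordElem θ c)) =
      qf q (degW θ b) (degW θ c) • (TensorProduct.mk ℂ (TV θ) (TV θ)).compl₁₂
        (LinearMap.mulRight ℂ (wordElem θ c)) (LinearMap.mulLeft ℂ (wordElem θ b)) :=
    eq_of_wordElem fun a => eq_of_wordElem fun d => braidedMul_words q a b c d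
  exact LinearMap.congr_fun (LinearMap.congr_fun h a) d

/-- Right multiplication by the coproduct of the generator `x_l` in the braided tensor square. -/
def mulComulGen (l : Fin θ) : TV θ ⊗[ℂ] TV θ →ₗ[ℂ] TV θ ⊗[ℂ] TV θ :=
  TensorProduct.map (LinearMap.mulRight ℂ (gen θ l)) (rho q l).toLinearMap +
    TensorProduct.map LinearMap.id (LinearMap.mulRight ℂ (gen θ l))

theorem mulComulGen_words (l : Fin θ) (c d : List (Fin θ)) :
    mulComulGen q l (wordElem θ c ⊗ₜ[ℂ] wordElem θ d) =
      qf q (degW θ d) (δ θ l) • (wordElem θ (c ++ [l]) ⊗ₜ[ℂ] wordElem θ d) +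
        wordElem θ c ⊗ₜ[ℂ] wordElem θ (d ++ [l]) := by
  simp only [mulComulGen, LinearMap.add_apply, TensorProduct.map_tmul, LinearMap.mulRight_apply,
    AlgHom.toLinearMap_apply, rho, scale_wordElem, TensorProduct.tmul_smul, LinearMap.id_apply,
    wordElem_append, wordElem_singleton]

theorem braidedMul_mulComulGen (l : Fin θ) (s t : TV θ ⊗[ℂ] TV θ) :
    braidedMul q s (mulComulGen q l t) = mulComulGen q l (braidedMul q s t) := by
  have h : (braidedMul q).compl₂ (mulComulGen q l) = (braidedMul q).compr₂ (mulComulGen q l) := by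
    refine (wordBasis₂ θ).ext fun ⟨a, b⟩ => (wordBasis₂ θ).ext fun ⟨c, d⟩ => ?_
    simp only [LinearMap.compl₂_apply, LinearMap.compr₂_apply, wordBasis₂_apply,
      mulComulGen_words, map_add, map_smul, braidedMul_words, ← wordElem_append, degW_append,
      qf_add_left, qf_add_right, degW_singleton, smul_add, smul_smul, List.append_assoc]
    congr 2
    ring
  exact LinearMap.congr_fun (LinearMap.congr_fun h s) t

/-- The braided coproduct of `T(V)`. -/
def comul : TV θ →ₗ[ℂ] TV θ ⊗[ℂ] TV θ :=
  (wordBasis θ).constr ℂ fun w => w.foldl (fun t l => mulComulGen q l t) (1 ⊗ₜ[ℂ] 1)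

theorem comul_word (w : List (Fin θ)) :
    comul q (wordElem θ w) = w.foldl (fun t l => mulComulGen q l t) (1 ⊗ₜ[ℂ] 1) := by
  rw [← wordBasis_apply, comul, Module.Basis.constr_basis]

theorem comul_one : comul q 1 = 1 ⊗ₜ[ℂ] 1 := comul_word q []

theorem comul_gen_mul (b : TV θ) (l : Fin θ) :
    comul q (b * gen θ l) = mulComulGen q l (comul q b) := by
  have h : comul q ∘ₗ LinearMap.mulRight ℂ (gen θ l) = mulComulGen q l ∘ₗ comul q :=
    eq_of_wordElem fun w => by
      simp only [LinearMap.comp_apply, LinearMap.mulRight_apply]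
      rw [← wordElem_singleton, ← wordElem_append, comul_word, comul_word, List.foldl_append]
      rfl
  exact LinearMap.congr_fun h b

theorem braidedMul_one_right (s : TV θ ⊗[ℂ] TV θ) : braidedMul q s (1 ⊗ₜ[ℂ] 1) = s := by
  have h : (braidedMul q).flip (1 ⊗ₜ[ℂ] 1) = LinearMap.id := by
    refine (wordBasis₂ θ).ext fun ⟨a, b⟩ => ?_
    have := braidedMul_words q a b [] []
    simpa [wordBasis₂_apply, wordElem_nil, degW_nil, qf_zero_right] using this
  exact LinearMap.congr_fun h s

/-- The braided bialgebra structure on `T(V)`. -/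
def braidedStr : BraidedStr θ q where
  Δ := comul q
  mulB := braidedMul q
  mulB_spec := braidedMul_spec q
  Δ_one := comul_one q
  Δ_gen i := by
    rw [← one_mul (gen θ i), comul_gen_mul, comul_one]
    simp [mulComulGen]
  Δ_mul u v := by
    refine eq_of_mul_gen (comul q ∘ₗ LinearMap.mulLeft ℂ u) (braidedMul q (comul q u) ∘ₗ comul q)
      (by simp [comul_one, braidedMul_one_right]) ?_ v
    intro b l h
    simp only [LinearMap.comp_apply, LinearMap.mulLeft_apply] at h ⊢
    rw [← mul_assoc, comul_gen_mul, h, comul_gen_mul, braidedMul_mulComulGen]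

end Existence

section Radical

/-- An element of a tensor product of vector spaces vanishes if all its contractions against a
separating family of functionals on the right factor do. -/
theorem tensor_eq_zero_of_contract {A B ι : Type*} [AddCommGroup A] [Module ℂ A] [AddCommGroup B]
    [Module ℂ B] (f : ι → B →ₗ[ℂ] ℂ) (hf : ∀ b, (∀ u, f u b = 0) → b = 0) (z : A ⊗[ℂ] B)
    (hz : ∀ u, TensorProduct.rid ℂ A (LinearMap.lTensor A (f u) z) = 0) : z = 0 := by
  classical
  let e := Module.Basis.ofVectorSpace ℂ A
  have key : ∀ (w : A ⊗[ℂ] B) i u, f u (TensorProduct.equivFinsuppOfBasisLeft e w i) =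
      e.repr (TensorProduct.rid ℂ A (LinearMap.lTensor A (f u) w)) i := by
    intro w i u
    induction w with
    | zero => simp
    | tmul a b => simp [mul_comm]
    | add x y hx hy => simp only [map_add, Finsupp.add_apply, hx, hy]
  apply (TensorProduct.equivFinsuppOfBasisLeft e).injective
  ext i
  rw [map_zero]
  exact hf _ fun u => by rw [key, hz, map_zero]; rfl

theorem ker_map_mkQ_le_mixedSub {θ : ℕ} (I : Submodule ℂ (TV θ)) :
    LinearMap.ker (TensorProduct.map I.mkQ I.mkQ) ≤ mixedSub I := by
  rw [TensorProduct.map_ker (LinearMap.exact_subtype_mkQ I) (Submodule.mkQ_surjective I)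
    (LinearMap.exact_subtype_mkQ I) (Submodule.mkQ_surjective I), sup_le_iff]
  constructor
  · rintro _ ⟨t, rfl⟩
    induction t with
    | zero => simp
    | tmul a b => exact Submodule.subset_span (Or.inr ⟨a, b, b.2, rfl⟩)
    | add x y hx hy => rw [map_add]; exact add_mem hx hy
  · rintro _ ⟨t, rfl⟩
    induction t with
    | zero => simp
    | tmul a b => exact Submodule.subset_span (Or.inl ⟨a, b, a.2, rfl⟩)
    | add x y hx hy => rw [map_add]; exact add_mem hx hy

variable {θ : ℕ} {q : Fin θ → Fin θ → ℂˣ} (S : BraidedStr θ q)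

/-- The composition of the skew derivations along a word, the first letter being applied first. -/
def Dword : List (Fin θ) → TV θ →ₗ[ℂ] TV θ
  | [] => LinearMap.id
  | k :: u => Dword u ∘ₗ D S k

/-- The radical of the canonical pairing: elements all of whose iterated derivatives have zero
constant term. -/
def radical : Submodule ℂ (TV θ) := ⨅ u, LinearMap.ker (coef [] ∘ₗ Dword S u)

variable {S}

theorem mem_radical {x : TV θ} : x ∈ radical S ↔ ∀ u, coef [] (Dword S u x) = 0 := by
  simp [radical]

theorem D_mem_radical {x : TV θ} (hx : x ∈ radical S) (k : Fin θ) : D S k x ∈ radical S :=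
  mem_radical.2 fun u => mem_radical.1 hx (k :: u)

variable (S) in
theorem Dword_scale (c : Fin θ → ℂ) (u : List (Fin θ)) (x : TV θ) :
    ∃ a : ℂ, Dword S u (scale c x) = a • scale c (Dword S u x) := by
  induction u generalizing x with
  | nil => exact ⟨1, by simp [Dword]⟩
  | cons k u ih =>
    obtain ⟨a, ha⟩ := ih (D S k x)
    exact ⟨c k * a, by simp [Dword, D_scale, ha, smul_smul]⟩

theorem scale_mem_radical (c : Fin θ → ℂ) {x : TV θ} (hx : x ∈ radical S) :
    scale c x ∈ radical S :=
  mem_radical.2 fun u => by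
    obtain ⟨a, ha⟩ := Dword_scale S c u x
    rw [ha, map_smul, coef_nil_scale, mem_radical.1 hx, smul_zero]

theorem mul_gen_mem_radical {x : TV θ} (hx : x ∈ radical S) (l : Fin θ) :
    x * gen θ l ∈ radical S :=
  mem_radical.2 fun u => by
    induction u generalizing x with
    | nil => exact coef_nil_mul_gen x l
    | cons k u ih =>
      rw [Dword, LinearMap.comp_apply, D_mul_gen, map_add, map_add, map_smul, map_smul,
        ih (D_mem_radical hx k), smul_zero, zero_add]
      split_ifs
      · exact mem_radical.1 hx u
      · simp

theorem coef_nil_gen_mul (l : Fin θ) (b : TV θ) : coef [] (gen θ l * b) = 0 := by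
  have : coef [] ∘ₗ LinearMap.mulLeft ℂ (gen θ l) = 0 := eq_of_wordElem fun w => by
    simp [← wordElem_singleton, ← wordElem_append, coef_wordElem]
  exact LinearMap.congr_fun this b

theorem gen_mul_mem_radical {x : TV θ} (hx : x ∈ radical S) (l : Fin θ) :
    gen θ l * x ∈ radical S :=
  mem_radical.2 fun u => by
    induction u generalizing x with
    | nil => exact coef_nil_gen_mul l x
    | cons k u ih =>
      rw [Dword, LinearMap.comp_apply, D_mul, map_add, map_add, ih (D_mem_radical hx k), zero_add,
        D_gen]
      split_ifs
      · rw [one_mul]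
        exact mem_radical.1 (scale_mem_radical _ hx) u
      · simp

variable (S) in
theorem coef_nil_D (k : Fin θ) (b : TV θ) : coef [] (D S k b) = coef [k] b := by
  refine eq_of_mul_gen (coef [] ∘ₗ D S k) (coef [k]) (by simp [D_one, coef_one]) ?_ b
  intro b l _
  rw [LinearMap.comp_apply, D_mul_gen, coef_single_mul_gen, map_add, map_smul, coef_nil_mul_gen]
  split_ifs <;> simp

variable (S) in
theorem D_homogTot_succ (k : Fin θ) (n : ℕ) (w : List (Fin θ)) (hw : w.length = n + 1) :
    D S k (wordElem θ w) ∈ homogTot θ n := by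
  induction n generalizing w with
  | zero =>
    obtain ⟨l, rfl⟩ := List.length_eq_one_iff.1 hw
    rw [wordElem_singleton, D_gen]
    split_ifs
    · exact Submodule.subset_span ⟨[], rfl, rfl⟩
    · exact zero_mem _
  | succ n ih =>
    obtain rfl | ⟨w, l, rfl⟩ := w.eq_nil_or_concat
    · simp at hw
    have hw' : w.length = n + 1 := by simpa using hw
    rw [List.concat_eq_append, wordElem_append, wordElem_singleton, D_mul_gen]
    refine add_mem (Submodule.smul_mem _ _ ?_) ?_
    · have hle : homogTot θ n ≤ (homogTot θ (n + 1)).comap (LinearMap.mulRight ℂ (gen θ l)) := by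
        rw [homogTot, Submodule.span_le]
        rintro _ ⟨v, hv, rfl⟩
        exact Submodule.subset_span ⟨v ++ [l], by simp [hv], by
          rw [wordElem_append, wordElem_singleton]; rfl⟩
      exact hle (ih w hw')
    · split_ifs
      · exact Submodule.subset_span ⟨w, hw', rfl⟩
      · exact zero_mem _

variable (S) in
theorem coef_nil_Dword_of_length_ne (u w : List (Fin θ)) (h : w.length ≠ u.length) :
    coef [] (Dword S u (wordElem θ w)) = 0 := by
  induction u generalizing w with
  | nil =>
    rw [Dword, LinearMap.id_apply, coef_wordElem, if_neg]
    rintro rfl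
    exact h rfl
  | cons k u ih =>
    rw [Dword, LinearMap.comp_apply]
    cases hw : w.length with
    | zero =>
      rw [List.length_eq_zero_iff] at hw
      rw [hw, wordElem_nil, D_one, map_zero, map_zero]
    | succ n =>
      have hle : homogTot θ n ≤ LinearMap.ker (coef [] ∘ₗ Dword S u) := by
        rw [homogTot, Submodule.span_le]
        rintro _ ⟨v, hv, rfl⟩
        exact ih v (by rw [hv]; intro e; apply h; simp [hw, e])
      exact hle (D_homogTot_succ S k n w hw)

theorem sum_coef (x : TV θ) :
    x = ∑ w ∈ ((wordBasis θ).repr x).support, coef w x • wordElem θ w := by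
  conv_lhs => rw [← (wordBasis θ).linearCombination_repr x, Finsupp.linearCombination_apply]
  simp only [Finsupp.sum, wordBasis_apply]
  rfl

/-- The homogeneous components of an element of the radical lie in the radical. -/
theorem component_mem_radical {x : TV θ} (hx : x ∈ radical S) (n : ℕ) :
    ∑ w ∈ ((wordBasis θ).repr x).support with w.length = n, coef w x • wordElem θ w ∈
      radical S := by
  refine mem_radical.2 fun u => ?_
  rw [map_sum, map_sum]
  by_cases hu : u.length = n
  · rw [Finset.sum_filter_of_ne, ← map_sum, ← map_sum, ← sum_coef]
    · exact mem_radical.1 hx u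
    · intro w _ hne
      by_contra hw
      apply hne
      rw [map_smul, map_smul, coef_nil_Dword_of_length_ne S u w (by rwa [hu]), smul_zero]
  · refine Finset.sum_eq_zero fun w hw => ?_
    rw [map_smul, map_smul, coef_nil_Dword_of_length_ne S u w, smul_zero]
    rw [(Finset.mem_filter.1 hw).2]
    exact Ne.symm hu

variable (S) in
theorem act_coef_nil_comp_Dword (u : List (Fin θ)) (x : TV θ) :
    act S (coef [] ∘ₗ Dword S u) x = Dword S u x := by
  have h : LinearMap.lTensor (TV θ) (Dword S u) (S.Δ x) = S.Δ (Dword S u x) := by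
    induction u generalizing x with
    | nil => simp [Dword]
    | cons k u ih =>
      rw [Dword, LinearMap.lTensor_comp, LinearMap.comp_apply, lTensor_D_comul, ih]
      rfl
  rw [← act_counit S (Dword S u x)]
  simp only [act, LinearMap.lTensor_comp, LinearMap.comp_apply, h]

theorem radical_coideal {x : TV θ} (hx : x ∈ radical S) : S.Δ x ∈ mixedSub (radical S) := by
  apply ker_map_mkQ_le_mixedSub
  rw [LinearMap.mem_ker]
  have hle : ∀ u, radical S ≤ LinearMap.ker (coef [] ∘ₗ Dword S u) := fun u => iInf_le _ u
  refine tensor_eq_zero_of_contract (fun u => (radical S).liftQ _ (hle u)) ?_ _ ?_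
  · intro b hb
    obtain ⟨b, rfl⟩ := (radical S).mkQ_surjective b
    rw [Submodule.mkQ_apply, Submodule.Quotient.mk_eq_zero]
    exact mem_radical.2 fun u => hb u
  · intro u
    have key : ∀ t : TV θ ⊗[ℂ] TV θ,
        TensorProduct.rid ℂ _ (LinearMap.lTensor _ ((radical S).liftQ _ (hle u))
          (TensorProduct.map (radical S).mkQ (radical S).mkQ t)) =
        (radical S).mkQ (TensorProduct.rid ℂ _ (LinearMap.lTensor _
          (coef [] ∘ₗ Dword S u) t)) := by
      intro t
      induction t with
      | zero => simp
      | tmul a b => simp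
      | add a b ha hb => simp only [map_add, ha, hb]
    rw [key]
    have h := act_coef_nil_comp_Dword S u x
    simp only [act, LinearMap.comp_apply, LinearEquiv.coe_coe] at h
    rw [h, Submodule.mkQ_apply, Submodule.Quotient.mk_eq_zero]
    clear h key
    induction u generalizing x with
    | nil => exact hx
    | cons k u ih => exact ih (D_mem_radical hx k)

variable (S) in
theorem isPreNicholsIdeal_radical : IsPreNicholsIdeal S (radical S) where
  mul_left a := by
    have := mem_of_mul_gen
      { carrier := {a | ∀ x ∈ radical S, a * x ∈ radical S}
        add_mem' := fun ha hb x hx => by rw [add_mul]; exact add_mem (ha x hx) (hb x hx)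
        zero_mem' := fun x _ => by simp
        smul_mem' := fun c a ha x hx => by
          rw [smul_mul_assoc]; exact Submodule.smul_mem _ _ (ha x hx) }
      (fun x hx => by rwa [one_mul])
      (fun b hb l x hx => by rw [mul_assoc]; exact hb _ (gen_mul_mem_radical hx l)) a
    exact fun x hx => this x hx
  mul_right a x hx :=
    mem_of_mul_gen ((radical S).comap (LinearMap.mulLeft ℂ x)) (by simpa using hx)
      (fun b hb l => by
        have := mul_gen_mem_radical hb l
        simpa [mul_assoc] using this) a
  homog_ge2 := by
    refine le_antisymm (fun x hx => ?_) (Submodule.span_le.2 fun x hx => hx.1)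
    rw [sum_coef x, ← Finset.sum_fiberwise_of_maps_to (t := Finset.image List.length
      ((wordBasis θ).repr x).support) (g := List.length)
      (fun w hw => Finset.mem_image_of_mem _ hw)]
    refine Submodule.sum_mem _ fun n hn => Submodule.subset_span
      ⟨component_mem_radical hx n, n, ?_, Submodule.sum_mem _ fun w hw => Submodule.smul_mem _ _
        (Submodule.subset_span ⟨w, (Finset.mem_filter.1 hw).2, rfl⟩)⟩
    obtain ⟨w, hw, rfl⟩ := Finset.mem_image.1 hn
    by_contra hlt
    refine Finsupp.mem_support_iff.1 hw ?_
    change coef w x = 0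
    obtain rfl | ⟨k, rfl⟩ : w = [] ∨ ∃ k, w = [k] := by
      match w, hlt with
      | [], _ => exact Or.inl rfl
      | [k], _ => exact Or.inr ⟨k, rfl⟩
      | _ :: _ :: _, h => simp at h
    · exact mem_radical.1 hx []
    · rw [← coef_nil_D S]
      exact mem_radical.1 hx [k]
  coideal _ hx := radical_coideal hx

variable (S) in
theorem radical_le_Jq : radical S ≤ Jq S := le_sSup (isPreNicholsIdeal_radical S)

end Radical

section Ideals

variable {θ : ℕ} {q : Fin θ → Fin θ → ℂˣ} {S : BraidedStr θ q} {I : Submodule ℂ (TV θ)}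

theorem coef_eq_zero_of_mem (hI : IsPreNicholsIdeal S I) (v : List (Fin θ)) (hv : v.length < 2)
    {x : TV θ} (hx : x ∈ I) : coef v x = 0 := by
  have hle : I ≤ LinearMap.ker (coef v) := by
    rw [hI.homog_ge2, Submodule.span_le]
    rintro y ⟨_, n, hn, hy⟩
    have : homogTot θ n ≤ LinearMap.ker (coef v) := by
      rw [homogTot, Submodule.span_le]
      rintro _ ⟨w, hw, rfl⟩
      rw [SetLike.mem_coe, LinearMap.mem_ker, coef_wordElem, if_neg]
      rintro rfl
      omega
    exact this hy
  exact hle hx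

theorem act_mem (hI : IsPreNicholsIdeal S I) {f : TV θ →ₗ[ℂ] ℂ} (hf : ∀ x ∈ I, f x = 0)
    {x : TV θ} (hx : x ∈ I) : act S f x ∈ I := by
  have hle : mixedSub I ≤ I.comap
      ((TensorProduct.rid ℂ (TV θ)).toLinearMap ∘ₗ LinearMap.lTensor (TV θ) f) := by
    rw [mixedSub, mixedPair, Submodule.span_le]
    rintro _ (⟨a, b, ha, rfl⟩ | ⟨a, b, hb, rfl⟩)
    · simpa using Submodule.smul_mem I (f b) ha
    · simp [hf b hb]
  exact hle (hI.coideal x hx)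

theorem actLeft_mem (hI : IsPreNicholsIdeal S I) {f : TV θ →ₗ[ℂ] ℂ} (hf : ∀ x ∈ I, f x = 0)
    {x : TV θ} (hx : x ∈ I) : actLeft S f x ∈ I := by
  have hle : mixedSub I ≤ I.comap
      ((TensorProduct.lid ℂ (TV θ)).toLinearMap ∘ₗ LinearMap.rTensor (TV θ) f) := by
    rw [mixedSub, mixedPair, Submodule.span_le]
    rintro _ (⟨a, b, ha, rfl⟩ | ⟨a, b, hb, rfl⟩)
    · simp [hf a ha]
    · simpa using Submodule.smul_mem I (f a) hb
  exact hle (hI.coideal x hx)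

theorem D_mem (hI : IsPreNicholsIdeal S I) (k : Fin θ) {x : TV θ} (hx : x ∈ I) : D S k x ∈ I :=
  act_mem hI (fun _ hy => coef_eq_zero_of_mem hI [k] (by simp) hy) hx

theorem sigma_mem (hI : IsPreNicholsIdeal S I) (l : Fin θ) {x : TV θ} (hx : x ∈ I) :
    sigma q l x ∈ I := by
  have h := D_mul S l (gen θ l) x
  rw [D_gen, if_pos rfl, one_mul] at h
  rw [← add_sub_cancel_left (gen θ l * D S l x) (sigma q l x), ← h]
  exact sub_mem (D_mem hI l (hI.mul_left _ _ hx)) (hI.mul_left _ _ (D_mem hI l hx))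

theorem rho_mem (hI : IsPreNicholsIdeal S I) (l : Fin θ) {x : TV θ} (hx : x ∈ I) :
    rho q l x ∈ I := by
  have h := actLeft_mul_gen S (coef [l]) x l
  have h2 : coef [l] ∘ₗ LinearMap.mulRight ℂ (gen θ l) = coef [] :=
    LinearMap.ext fun b => by simpa using coef_single_mul_gen l b l
  rw [h2, actLeft_counit] at h
  rw [← add_sub_cancel_right (rho q l x) (actLeft S (coef [l]) x * gen θ l), ← h]
  have hf : ∀ y ∈ I, coef [l] y = 0 := fun _ hy => coef_eq_zero_of_mem hI [l] (by simp) hy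
  exact sub_mem (actLeft_mem hI hf (hI.mul_right _ _ hx))
    (hI.mul_right _ _ (actLeft_mem hI hf hx))

end Ideals

section Filtration

variable {θ : ℕ}

theorem Wfil_mono {m n : ℕ} (h : m ≤ n) : Wfil θ m ≤ Wfil θ n :=
  Submodule.span_mono fun _ ⟨w, hw, hx⟩ => ⟨w, hw.trans h, hx⟩

theorem one_mem_Wfil (n : ℕ) : (1 : TV θ) ∈ Wfil θ n :=
  Submodule.subset_span ⟨[], Nat.zero_le _, rfl⟩

theorem gen_mem_Wfil (l : Fin θ) : gen θ l ∈ Wfil θ 1 :=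
  Submodule.subset_span ⟨[l], le_rfl, (wordElem_singleton l).symm⟩

theorem mul_mem_Wfil {a b : ℕ} {x y : TV θ} (hx : x ∈ Wfil θ a) (hy : y ∈ Wfil θ b) :
    x * y ∈ Wfil θ (a + b) := by
  have h := Submodule.mul_mem_mul hx hy
  rw [Wfil, Wfil, Submodule.span_mul_span] at h
  refine Submodule.span_mono ?_ h
  rintro _ ⟨_, ⟨u, hu, rfl⟩, _, ⟨v, hv, rfl⟩, rfl⟩
  exact ⟨u ++ v, by simp; omega, (wordElem_append u v).symm⟩

instance (n : ℕ) : FiniteDimensional ℂ (Wfil θ n) := by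
  refine FiniteDimensional.span_of_finite ℂ ?_
  refine ((List.finite_length_le (Fin θ) n).image (wordElem θ)).subset ?_
  rintro _ ⟨w, hw, rfl⟩
  exact ⟨w, hw, rfl⟩

theorem coef_nil_mul (a b : TV θ) : coef [] (a * b) = coef [] a * coef [] b := by
  refine eq_of_mul_gen (coef [] ∘ₗ LinearMap.mulLeft ℂ a) (coef [] a • coef [])
    (by simp [coef_one]) ?_ b
  intro b l _
  simp [← mul_assoc, coef_nil_mul_gen]

end Filtration

section Transfer

variable {θ θ' : ℕ} {q : Fin θ → Fin θ → ℂˣ} {S : BraidedStr θ q} {I : Submodule ℂ (TV θ)}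

theorem lift_mem_Wfil {Y : Fin θ' → TV θ} {e : ℕ} (hY : ∀ v, Y v ∈ Wfil θ e) (n : ℕ) {x : TV θ'}
    (hx : x ∈ Wfil θ' n) : FreeAlgebra.lift ℂ Y x ∈ Wfil θ (e * n) := by
  have hw : ∀ w : List (Fin θ'), FreeAlgebra.lift ℂ Y (wordElem θ' w) ∈ Wfil θ (e * w.length) := by
    intro w
    induction w using List.reverseRecOn with
    | nil => simpa [wordElem_nil] using one_mem_Wfil 0
    | append_singleton w l ih =>
      rw [wordElem_append, map_mul, wordElem_singleton, gen, FreeAlgebra.lift_ι_apply,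
        List.length_append, mul_add]
      exact mul_mem_Wfil ih (by simpa using hY l)
  have hle : Wfil θ' n ≤ (Wfil θ (e * n)).comap (FreeAlgebra.lift ℂ Y).toLinearMap := by
    rw [Wfil, Submodule.span_le]
    rintro _ ⟨w, hwn, rfl⟩
    exact Wfil_mono (Nat.mul_le_mul_left e hwn) (hw w)
  exact hle hx

/-- Growth is inherited by subalgebras, and then by quotients of these. -/
theorem FinGK.of_comap_le (hGK : FinGK I) {Y : Fin θ' → TV θ} {e : ℕ} (hY : ∀ v, Y v ∈ Wfil θ e)
    {J : Submodule ℂ (TV θ')} (hJ : I.comap (FreeAlgebra.lift ℂ Y).toLinearMap ≤ J) :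
    FinGK J := by
  obtain ⟨C, d, h⟩ := hGK
  refine ⟨C * (e + 1) ^ d, d, fun n => ?_⟩
  have hn := h (e * n)
  set φ := (FreeAlgebra.lift ℂ Y).toLinearMap with hφ
  set K := I.comap φ with hK
  let ψ : (TV θ' ⧸ K) →ₗ[ℂ] TV θ ⧸ I := K.mapQ I φ le_rfl
  have hψ : Function.Injective ψ := by
    rw [← LinearMap.ker_eq_bot, Submodule.ker_mapQ, ← hK, Submodule.mkQ_map_self]
  have h1 : (Wfil θ' n).map J.mkQ = ((Wfil θ' n).map K.mkQ).map (Submodule.factor hJ) := by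
    rw [← Submodule.map_comp, Submodule.factor_comp_mk]
  have h2 : Module.finrank ℂ ((Wfil θ' n).map J.mkQ) ≤
      Module.finrank ℂ ((Wfil θ' n).map K.mkQ) := by
    rw [h1]
    exact Submodule.finrank_map_le _ _
  have h3 : Module.finrank ℂ ((Wfil θ' n).map K.mkQ) ≤
      Module.finrank ℂ ((Wfil θ (e * n)).map I.mkQ) := by
    rw [(Submodule.equivMapOfInjective ψ hψ ((Wfil θ' n).map K.mkQ)).finrank_eq]
    refine Submodule.finrank_mono ?_
    rw [← Submodule.map_comp, Submodule.mapQ_mkQ, Submodule.map_comp]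
    refine Submodule.map_mono ?_
    rintro _ ⟨x, hx, rfl⟩
    exact lift_mem_Wfil hY n hx
  calc _ ≤ C * (e * n + 1) ^ d := (h2.trans h3).trans hn
    _ ≤ C * ((e + 1) * (n + 1)) ^ d := by
      refine Nat.mul_le_mul_left C (Nat.pow_le_pow_left ?_ d)
      nlinarith
    _ = _ := by rw [mul_pow, mul_assoc]

/-- Suppose that elements `Y_v` of a pre-Nichols algebra of finite GKdim carry operators `P_u`
acting on the subalgebra they generate as the skew derivations attached to the braiding matrix
`q'`. Then `q'` has a finite root system. -/
theorem finiteRootSystem_of_operators (hAAH : AAH) (hI : IsPreNicholsIdeal S I) (hGK : FinGK I)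
    (q' : Fin θ' → Fin θ' → ℂˣ) (Y : Fin θ' → TV θ) (P : Fin θ' → TV θ →ₗ[ℂ] TV θ)
    (G : Submodule ℂ (TV θ)) {e : ℕ} (hY : ∀ v, Y v ∈ Wfil θ e) (hY0 : ∀ v, coef [] (Y v) = 0)
    (hP : ∀ u, ∀ x ∈ I, P u x ∈ I) (hP1 : ∀ u, P u 1 = 0) (hG1 : 1 ∈ G)
    (hG : ∀ w ∈ G, ∀ v, w * Y v ∈ G)
    (hPY : ∀ u v, ∀ w ∈ G,
      P u (w * Y v) = (q' u v : ℂ) • (P u w * Y v) + if u = v then w else 0) :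
    FiniteRootSystem q' := by
  let S' := braidedStr q'
  have hφ : ∀ x, FreeAlgebra.lift ℂ Y x ∈ G := by
    refine mem_of_mul_gen (G.comap (FreeAlgebra.lift ℂ Y).toLinearMap) (by simpa using hG1) ?_
    intro b hb l
    have := hG _ hb l
    simpa [gen] using this
  have hD : ∀ u x, P u (FreeAlgebra.lift ℂ Y x) = FreeAlgebra.lift ℂ Y (D S' u x) := by
    intro u
    refine eq_of_mul_gen (P u ∘ₗ (FreeAlgebra.lift ℂ Y).toLinearMap)
      ((FreeAlgebra.lift ℂ Y).toLinearMap ∘ₗ D S' u) (by simp [hP1, D_one]) ?_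
    intro b l h
    simp only [LinearMap.comp_apply, AlgHom.toLinearMap_apply] at h ⊢
    rw [map_mul (FreeAlgebra.lift ℂ Y), D_mul_gen, map_add, map_smul,
      map_mul (FreeAlgebra.lift ℂ Y), ← h, gen, FreeAlgebra.lift_ι_apply,
      hPY u l _ (hφ b)]
    split_ifs <;> simp
  have hε : ∀ x, coef [] (FreeAlgebra.lift ℂ Y x) = coef [] x := by
    refine eq_of_mul_gen (coef [] ∘ₗ (FreeAlgebra.lift ℂ Y).toLinearMap) (coef [])
      (by simp [coef_one]) ?_
    intro b l _
    rw [coef_nil_mul_gen, LinearMap.comp_apply, AlgHom.toLinearMap_apply, map_mul, coef_nil_mul,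
      gen, FreeAlgebra.lift_ι_apply, hY0, mul_zero]
  refine hAAH θ' q' S' (hGK.of_comap_le hY (le_trans ?_ (radical_le_Jq S')))
  intro x hx
  refine mem_radical.2 fun u => ?_
  replace hx : FreeAlgebra.lift ℂ Y x ∈ I := hx
  induction u generalizing x with
  | nil =>
    rw [Dword, LinearMap.id_apply, ← hε]
    exact coef_eq_zero_of_mem hI [] (by simp) hx
  | cons k u ih => exact ih (by rw [← hD]; exact hP k _ hx)

end Transfer

section Functional

variable {θ : ℕ} {q : Fin θ → Fin θ → ℂˣ} {S : BraidedStr θ q} {I : Submodule ℂ (TV θ)}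

/-- The functional on `T(V)` of degree two with matrix `h`. -/
def eta (h : Fin θ → Fin θ → ℂ) : TV θ →ₗ[ℂ] ℂ := ∑ m, ∑ n, h m n • coef [m, n]

theorem eta_apply (h : Fin θ → Fin θ → ℂ) (x : TV θ) :
    eta h x = ∑ m, ∑ n, h m n * coef [m, n] x := by
  simp [eta, LinearMap.sum_apply]

theorem eta_eq_zero_of_mem (hI : IsPreNicholsIdeal S I) {g : TV θ →ₗ[ℂ] ℂ} (hg : ∀ x ∈ I, g x = 0)
    {x : TV θ} (hx : x ∈ I) : eta (fun m n => g (gen θ m * gen θ n)) x = 0 := by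
  have hdeg : ∀ n y, y ∈ homogTot θ n →
      eta (fun m n => g (gen θ m * gen θ n)) y = if n = 2 then g y else 0 := by
    intro n y hy
    rw [homogTot] at hy
    induction hy using Submodule.span_induction with
    | mem y hy =>
      obtain ⟨w, rfl, rfl⟩ := hy
      rw [eta_apply]
      split_ifs with hw
      · obtain ⟨a, b, rfl⟩ := List.length_eq_two.1 hw
        simp only [coef_wordElem, List.cons.injEq, and_true, mul_ite, mul_one, mul_zero]
        rw [Finset.sum_eq_single a, Finset.sum_eq_single b]
        · simp [wordElem]
        · intro n _ hn; simp [hn.symm]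
        · simp
        · intro m _ hm; simp [hm.symm]
        · simp
      · refine Finset.sum_eq_zero fun m _ => Finset.sum_eq_zero fun n _ => ?_
        rw [coef_wordElem, if_neg, mul_zero]
        rintro rfl
        exact hw rfl
    | zero => simp
    | add y z _ _ hy hz => rw [map_add, hy, hz]; split_ifs <;> simp
    | smul c y _ hy => rw [map_smul, hy]; split_ifs <;> simp
  have hle : I ≤ LinearMap.ker (eta fun m n => g (gen θ m * gen θ n)) := by
    conv_lhs => rw [hI.homog_ge2]
    rw [Submodule.span_le]
    rintro y ⟨hyI, n, -, hy⟩
    rw [SetLike.mem_coe, LinearMap.mem_ker, hdeg n y hy, hg y hyI, ite_self]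
  exact hle hx

theorem D_xw_pair {i j : Fin θ} (hij : i ≠ j) (hc : qtil q i j = 1) (k : Fin θ) :
    D S k (xw q [i, j]) = 0 := by
  rw [qtil] at hc
  rw [xw_pair, map_sub, map_smul, D_mul_gen, D_mul_gen, D_gen, D_gen]
  by_cases hi : k = i
  · subst hi
    simp [hij]
  · by_cases hj : k = j
    · subst hj
      simp [hi, smul_smul, hc]
    · simp [hi, hj]

/-- If `x_{ij}` does not vanish in the pre-Nichols algebra, there is a functional of degree two on
this algebra separating `x_{ij}` from `x_k²`. -/
theorem exists_eta (hI : IsPreNicholsIdeal S I) {i j : Fin θ} (hij : i ≠ j)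
    (hc : qtil q i j = 1) (hx : xw q [i, j] ∉ I) (k : Fin θ)
    (hk : qtil q i k * qtil q j k ≠ 1) :
    ∃ h : Fin θ → Fin θ → ℂ, h k k = 0 ∧ h i j - q i j * h j i = 1 ∧ ∀ x ∈ I, eta h x = 0 := by
  have hsep : xw q [i, j] ∉ I ⊔ Submodule.span ℂ {gen θ k * gen θ k} := by
    intro hmem
    obtain ⟨z, hz, y, hy, hzy⟩ := Submodule.mem_sup.1 hmem
    obtain ⟨c, rfl⟩ := Submodule.mem_span_singleton.1 hy
    have hz' : xw q [i, j] - c • (gen θ k * gen θ k) ∈ I := by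
      rw [← hzy, add_sub_cancel_right]; exact hz
    have hD := coef_eq_zero_of_mem hI [] (by simp) (D_mem hI k (D_mem hI k hz'))
    have hcq : c * (1 + q k k) = 0 := by
      rw [map_sub, D_xw_pair hij hc, map_smul, D_mul_gen, D_gen] at hD
      simp [D_gen, coef_one] at hD
      linear_combination -hD
    rcases mul_eq_zero.1 hcq with rfl | hkk
    · exact hx (by simpa using hz')
    have hsq : (q k k : ℂ) * q k k = 1 := by
      rw [show (q k k : ℂ) = -1 by linear_combination hkk]; ring
    have hone : ∀ a : ℂ, a • xw q [i, j] - c • (gen θ k * gen θ k) ∈ I → a = 1 := by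
      intro a ha
      by_contra hne
      have hsub := sub_mem ha hz'
      rw [sub_sub_sub_cancel_right, ← one_smul ℂ (xw q [i, j]), smul_smul, mul_one,
        ← sub_smul] at hsub
      exact hx ((Submodule.smul_mem_iff _ (sub_ne_zero.2 hne)).1 hsub)
    have hr := rho_mem hI k hz'
    have hs := sigma_mem hI k hz'
    have hr1 : (q i k : ℂ) * q j k = 1 := hone _ (by
      convert hr using 1
      simp only [xw_pair, map_sub, map_smul, map_mul, rho_gen, smul_mul_smul_comm, hsq, one_smul,
        smul_sub]
      module)
    have hs1 : (q k i : ℂ) * q k j = 1 := hone _ (by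
      convert hs using 1
      simp only [xw_pair, map_sub, map_smul, map_mul, sigma_gen, smul_mul_smul_comm, hsq,
        one_smul, smul_sub]
      module)
    apply hk
    simp only [qtil]
    linear_combination (q k i : ℂ) * q k j * hr1 + hs1
  obtain ⟨g, hgx, hg⟩ := Submodule.exists_le_ker_of_notMem hsep
  let g' := (g (xw q [i, j]))⁻¹ • g
  have hgI : ∀ x ∈ I, g' x = 0 := fun x hx => by
    have : g x = 0 := hg (Submodule.mem_sup_left hx)
    simp [g', this]
  refine ⟨fun m n => g' (gen θ m * gen θ n), ?_, ?_, fun x hx => eta_eq_zero_of_mem hI hgI hx⟩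
  · have : g (gen θ k * gen θ k) = 0 :=
      hg (Submodule.mem_sup_right (Submodule.mem_span_singleton_self _))
    simp [g', this]
  · have h1 : g' (xw q [i, j]) = 1 := by simp [g', hgx]
    rwa [xw_pair, map_sub, map_smul, smul_eq_mul] at h1

end Functional

section Operators

variable {θ : ℕ} {q : Fin θ → Fin θ → ℂˣ} (S : BraidedStr θ q)

theorem act_sum {ι : Type*} (s : Finset ι) (f : ι → TV θ →ₗ[ℂ] ℂ) :
    act S (∑ m ∈ s, f m) = ∑ m ∈ s, act S (f m) := by
  classical
  induction s using Finset.induction_on with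
  | empty => simp [act_zero]
  | insert a s ha ih => rw [Finset.sum_insert ha, Finset.sum_insert ha, act_add, ih]

theorem act_eta (h : Fin θ → Fin θ → ℂ) (x : TV θ) :
    act S (eta h) x = ∑ m, ∑ n, h m n • D₂ S m n x := by
  simp only [eta, act_sum, act_smul, LinearMap.sum_apply, LinearMap.smul_apply, D₂]

theorem act_eta_one (h : Fin θ → Fin θ → ℂ) : act S (eta h) 1 = 0 := by
  simp [act_eta, D₂_one]

theorem act_eta_gen (h : Fin θ → Fin θ → ℂ) (l : Fin θ) : act S (eta h) (gen θ l) = 0 := by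
  simp [act_eta, D₂_gen]

theorem act_eta_mul (h : Fin θ → Fin θ → ℂ) (i j : Fin θ) {w y : TV θ} {χ : Fin θ → ℂ}
    (hχ : ∀ l, sigma q l y = χ l • y)
    (hmid : ∀ m n, h m n = 0 ∨ D S m w = 0 ∨ D S n y = 0)
    (hw : ∀ m n, ¬(m = i ∧ n = j) → ¬(m = j ∧ n = i) → h m n = 0 ∨ D₂ S m n w = 0) :
    act S (eta h) (w * y) = w * act S (eta h) y + (χ i * χ j) • (act S (eta h) w * y) := by
  simp only [act_eta, Finset.mul_sum, Finset.sum_mul, Finset.smul_sum, ← Finset.sum_add_distrib]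
  refine Finset.sum_congr rfl fun m _ => Finset.sum_congr rfl fun n _ => ?_
  rw [D₂_mul, smul_add, smul_add, hχ, map_smul, hχ]
  have h1 : h m n • (D S m w * sigma q m (D S n y)) = 0 := by
    rcases hmid m n with e | e | e <;> simp [e]
  rw [h1, add_zero]
  congr 1
  · rw [mul_smul_comm]
  by_cases hm : m = i ∧ n = j
  · rw [hm.1, hm.2]
    simp only [mul_smul_comm, smul_mul_assoc]
    module
  by_cases hn : m = j ∧ n = i
  · rw [hn.1, hn.2]
    simp only [mul_smul_comm, smul_mul_assoc]
    module
  rcases hw m n hm hn with e | e <;> simp [e]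

/-- Elements killed by all skew derivations outside `X` and by the second order operators which do
not only involve `X` or the pair `{i, j}`. -/
def goodSub (i j : Fin θ) (X : Set (Fin θ)) : Submodule ℂ (TV θ) where
  carrier := {a | (∀ m ∉ X, D S m a = 0) ∧ ∀ m n, (m ∉ X ∨ n ∉ X) → ¬(m = i ∧ n = j) →
    ¬(m = j ∧ n = i) → D₂ S m n a = 0}
  add_mem' ha hb := ⟨fun m hm => by rw [map_add, ha.1 m hm, hb.1 m hm, add_zero],
    fun m n h1 h2 h3 => by rw [map_add, ha.2 m n h1 h2 h3, hb.2 m n h1 h2 h3, add_zero]⟩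
  zero_mem' := by simp
  smul_mem' c a ha := ⟨fun m hm => by rw [map_smul, ha.1 m hm, smul_zero],
    fun m n h1 h2 h3 => by rw [map_smul, ha.2 m n h1 h2 h3, smul_zero]⟩

variable {S} {i j : Fin θ} {X : Set (Fin θ)}

theorem one_mem_goodSub : 1 ∈ goodSub S i j X :=
  ⟨fun m _ => D_one S m, fun m n _ _ _ => D₂_one S m n⟩

theorem gen_mem_goodSub {k : Fin θ} (hk : k ∈ X) : gen θ k ∈ goodSub S i j X :=
  ⟨fun m hm => by rw [D_gen, if_neg]; rintro rfl; exact hm hk, fun m n _ _ _ => D₂_gen S m n k⟩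

theorem mul_mem_goodSub {w y : TV θ} (hw : w ∈ goodSub S i j X) (hy : y ∈ goodSub S i j X) :
    w * y ∈ goodSub S i j X := by
  refine ⟨fun m hm => by simp [D_mul, hw.1 m hm, hy.1 m hm], fun m n h1 h2 h3 => ?_⟩
  rw [D₂_mul, hw.2 m n h1 h2 h3, hy.2 m n h1 h2 h3]
  rcases h1 with h1 | h1
  · simp [hw.1 m h1]
  · simp [hy.1 n h1]

theorem goodSub_empty_le : goodSub S i j ∅ ≤ goodSub S i j X :=
  fun _ ha => ⟨fun m _ => ha.1 m (by simp), fun m n _ => ha.2 m n (by simp)⟩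

theorem act_eta_mul_of_mem {h : Fin θ → Fin θ → ℂ} (hX : X.Subsingleton)
    (hh : ∀ m ∈ X, h m m = 0) {w y : TV θ} {χ : Fin θ → ℂ} (hχ : ∀ l, sigma q l y = χ l • y)
    (hw : w ∈ goodSub S i j X) (hy : y ∈ goodSub S i j X) :
    act S (eta h) (w * y) = w * act S (eta h) y + (χ i * χ j) • (act S (eta h) w * y) := by
  have h0 : ∀ m n, m ∈ X → n ∈ X → h m n = 0 := fun m n hm hn => by rw [hX hn hm, hh m hm]
  refine act_eta_mul S h i j hχ (fun m n => ?_) (fun m n h1 h2 => ?_)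
  · by_cases hm : m ∈ X
    · by_cases hn : n ∈ X
      · exact Or.inl (h0 m n hm hn)
      · exact Or.inr (Or.inr (hy.1 n hn))
    · exact Or.inr (Or.inl (hw.1 m hm))
  · by_cases hm : m ∈ X ∧ n ∈ X
    · exact Or.inl (h0 m n hm.1 hm.2)
    · exact Or.inr (hw.2 m n (by tauto) h1 h2)

/-- The operators `P` with `P (w y) = w P(y) + c P(w) y` on good elements are stable under
composition with the skew derivations. -/
theorem D_comp_mul {P : TV θ →ₗ[ℂ] TV θ} {y : TV θ} {c d : ℂ} {m : Fin θ} (hm : m ∉ X)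
    (hd : sigma q m y = d • y) (hy : y ∈ goodSub S i j X)
    (hP : ∀ w ∈ goodSub S i j X, P (w * y) = w * P y + c • (P w * y)) (n : ℕ) :
    ∀ w ∈ goodSub S i j X, ((D S m ^ n) (P (w * y))) =
      w * (D S m ^ n) (P y) + (c * d ^ n) • ((D S m ^ n) (P w) * y) := by
  induction n with
  | zero => intro w hw; simpa using hP w hw
  | succ n ih =>
    intro w hw
    simp only [pow_succ', Module.End.mul_apply]
    rw [ih w hw, map_add, D_mul, hw.1 m hm, zero_mul, add_zero, map_smul, D_mul, hy.1 m hm,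
      mul_zero, zero_add, hd, mul_smul_comm, smul_smul]
    congr 2
    ring

/-- The operator `∂_i^a ∂_j^b (id ⊗ η) Δ`. -/
def opP (S : BraidedStr θ q) (i j : Fin θ) (h : Fin θ → Fin θ → ℂ) (a b : ℕ) :
    TV θ →ₗ[ℂ] TV θ :=
  (D S i ^ a) ∘ₗ (D S j ^ b) ∘ₗ act S (eta h)

theorem opP_one (h : Fin θ → Fin θ → ℂ) (a b : ℕ) : opP S i j h a b 1 = 0 := by
  simp [opP, act_eta_one]

theorem opP_gen (h : Fin θ → Fin θ → ℂ) (a b : ℕ) (l : Fin θ) :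
    opP S i j h a b (gen θ l) = 0 := by
  simp [opP, act_eta_gen]

theorem opP_mul {h : Fin θ → Fin θ → ℂ} (hX : X.Subsingleton) (hh : ∀ m ∈ X, h m m = 0) {a b : ℕ}
    (hiX : a = 0 ∨ i ∉ X) (hjX : j ∉ X) {w y : TV θ} {χ : Fin θ → ℂ}
    (hχ : ∀ l, sigma q l y = χ l • y) (hw : w ∈ goodSub S i j X) (hy : y ∈ goodSub S i j X) :
    opP S i j h a b (w * y) =
      w * opP S i j h a b y + (χ i ^ (a + 1) * χ j ^ (b + 1)) • (opP S i j h a b w * y) := by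
  have h1 := D_comp_mul (P := act S (eta h)) hjX (hχ j) hy
    (fun w hw => act_eta_mul_of_mem hX hh hχ hw hy) b
  rcases hiX with rfl | hiX
  · simp only [opP, pow_zero, LinearMap.comp_apply, Module.End.one_apply]
    rw [h1 w hw]
    congr 2
    ring
  · have h2 := D_comp_mul (P := (D S j ^ b) ∘ₗ act S (eta h)) hiX (hχ i) hy h1 a w hw
    simp only [opP, LinearMap.comp_apply] at h2 ⊢
    rw [h2]
    congr 2
    ring

theorem pow_D_mem {I : Submodule ℂ (TV θ)} (hI : IsPreNicholsIdeal S I) (m : Fin θ) (n : ℕ)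
    {x : TV θ} (hx : x ∈ I) : (D S m ^ n) x ∈ I := by
  induction n with
  | zero => simpa using hx
  | succ n ih => rw [pow_succ', Module.End.mul_apply]; exact D_mem hI m ih

theorem opP_mem {I : Submodule ℂ (TV θ)} (hI : IsPreNicholsIdeal S I) {h : Fin θ → Fin θ → ℂ}
    (hh : ∀ x ∈ I, eta h x = 0) (a b : ℕ) {x : TV θ} (hx : x ∈ I) : opP S i j h a b x ∈ I :=
  pow_D_mem hI i a (pow_D_mem hI j b (act_mem hI hh hx))

end Operators

section Elements

variable {θ : ℕ} {q : Fin θ → Fin θ → ℂˣ} {S : BraidedStr θ q} {i j : Fin θ}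

/-- `(ad_c x_j)^b x_{ij}`. -/
def adJ (q : Fin θ → Fin θ → ℂˣ) (i j : Fin θ) : ℕ → TV θ
  | 0 => xw q [i, j]
  | b + 1 => gen θ j * adJ q i j b - ((q j i : ℂ) * q j j ^ (b + 1)) • (adJ q i j b * gen θ j)

/-- `(ad_c x_i)^a (ad_c x_j)^b x_{ij}`. -/
def adIJ (q : Fin θ → Fin θ → ℂˣ) (i j : Fin θ) (b : ℕ) : ℕ → TV θ
  | 0 => adJ q i j b
  | a + 1 => gen θ i * adIJ q i j b a -
      ((q i i : ℂ) ^ (a + 1) * q i j ^ (b + 1)) • (adIJ q i j b a * gen θ i)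

theorem sigma_bracket {z : TV θ} {χ : Fin θ → ℂ} (hχ : ∀ m, sigma q m z = χ m • z) (l m : Fin θ)
    (c : ℂ) : sigma q m (gen θ l * z - c • (z * gen θ l)) =
      (χ m * q m l) • (gen θ l * z - c • (z * gen θ l)) := by
  simp only [map_sub, map_mul, map_smul, sigma_gen, hχ, smul_mul_smul_comm]
  module

theorem sigma_adJ (b : ℕ) (m : Fin θ) :
    sigma q m (adJ q i j b) = ((q m i : ℂ) ^ (0 + 1) * q m j ^ (b + 1)) • adJ q i j b := by
  induction b generalizing m with
  | zero =>
    rw [adJ, xw_pair]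
    simp only [map_sub, map_mul, map_smul, sigma_gen, smul_mul_smul_comm]
    module
  | succ b ih =>
    rw [adJ, sigma_bracket ih]
    congr 1
    ring

theorem sigma_adIJ (a b : ℕ) (m : Fin θ) :
    sigma q m (adIJ q i j b a) = ((q m i : ℂ) ^ (a + 1) * q m j ^ (b + 1)) • adIJ q i j b a := by
  induction a generalizing m with
  | zero => exact sigma_adJ b m
  | succ a ih =>
    rw [adIJ, sigma_bracket ih]
    congr 1
    ring

theorem bracket_mem_goodSub {z : TV θ} (hz : z ∈ goodSub S i j ∅) {l : Fin θ} {c : ℂ}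
    (hc : sigma q l z = c • z) : gen θ l * z - c • (z * gen θ l) ∈ goodSub S i j ∅ := by
  have hD : ∀ m, D S m z = 0 := fun m => hz.1 m (by simp)
  refine ⟨fun m _ => ?_, fun m n _ h1 h2 => ?_⟩
  · rw [map_sub, map_smul, D_mul, D_mul_gen, hD, D_gen]
    split_ifs with h
    · subst h; simp [hc]
    · simp
  · rw [map_sub, map_smul, D₂_mul, D₂_mul_gen, hD, hD, D₂_gen, hz.2 m n (by simp) h1 h2]
    simp

theorem xw_pair_mem_goodSub (hij : i ≠ j) (hc : qtil q i j = 1) :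
    xw q [i, j] ∈ goodSub S i j ∅ := by
  refine ⟨fun m _ => D_xw_pair hij hc m, fun m n _ h1 h2 => ?_⟩
  rw [xw_pair, map_sub, map_smul, D₂_mul_gen, D₂_mul_gen, D₂_gen, D₂_gen, D_gen, D_gen]
  have e1 : (if n = j then if m = i then (1 : TV θ) else 0 else 0) = 0 := by
    split_ifs with a b
    · exact absurd ⟨b, a⟩ h1
    · rfl
    · rfl
  have e2 : (if n = i then if m = j then (1 : TV θ) else 0 else 0) = 0 := by
    split_ifs with a b
    · exact absurd ⟨b, a⟩ h2
    · rfl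
    · rfl
  rw [e1, e2]
  simp

theorem adJ_mem_goodSub (hij : i ≠ j) (hc : qtil q i j = 1) (b : ℕ) :
    adJ q i j b ∈ goodSub S i j ∅ := by
  induction b with
  | zero => exact xw_pair_mem_goodSub hij hc
  | succ b ih => exact bracket_mem_goodSub ih (by simpa using sigma_adJ (q := q) (i := i) b j)

theorem adIJ_mem_goodSub (hij : i ≠ j) (hc : qtil q i j = 1) (a b : ℕ) :
    adIJ q i j b a ∈ goodSub S i j ∅ := by
  induction a with
  | zero => exact adJ_mem_goodSub hij hc b
  | succ a ih => exact bracket_mem_goodSub ih (sigma_adIJ a b i)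

theorem act_eta_bracket (h : Fin θ → Fin θ → ℂ) {z : TV θ} (hz : z ∈ goodSub S i j ∅)
    {χ : Fin θ → ℂ} (hχ : ∀ m, sigma q m z = χ m • z) (l : Fin θ) (c : ℂ) :
    act S (eta h) (gen θ l * z - c • (z * gen θ l)) =
      gen θ l * act S (eta h) z - (c * (q i l * q j l)) • (act S (eta h) z * gen θ l) := by
  have hD : ∀ m, D S m z = 0 := fun m => hz.1 m (by simp)
  rw [map_sub, map_smul, act_eta_mul S h i j hχ (fun m n => Or.inr (Or.inr (hD n)))
    (fun m n _ _ => Or.inr (D₂_gen S m n l)),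
    act_eta_mul S h i j (fun m => sigma_gen m l) (fun m n => Or.inr (Or.inl (hD m)))
    (fun m n h1 h2 => Or.inr (hz.2 m n (by simp) h1 h2)), act_eta_gen]
  simp [smul_smul]

theorem act_eta_xw_pair {h : Fin θ → Fin θ → ℂ} (hh : h i j - q i j * h j i = 1) :
    act S (eta h) (xw q [i, j]) = 1 := by
  have key : ∀ a b : Fin θ, act S (eta h) (gen θ a * gen θ b) = h a b • 1 := by
    intro a b
    simp only [act_eta, D₂_mul_gen, D₂_gen, D_gen, zero_mul, smul_zero, zero_add]
    rw [Finset.sum_eq_single a, Finset.sum_eq_single b]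
    · simp
    · intro n _ hn; simp [hn]
    · simp
    · intro m _ hm; simp [hm]
    · simp
  rw [xw_pair, map_sub, map_smul, key, key, smul_smul, ← sub_smul, hh, one_smul]

/-- The scalar `∏_{t < n} (1 - r^{t+2})`. -/
def defect (r : ℂ) (n : ℕ) : ℂ := ∏ t ∈ Finset.range n, (1 - r ^ (t + 2))

/-- The quantum factorial `(n)_r!`. -/
def qfac (r : ℂ) (n : ℕ) : ℂ := ∏ t ∈ Finset.range n, qnum r (t + 1)

theorem defect_succ (r : ℂ) (n : ℕ) : defect r (n + 1) = defect r n * (1 - r ^ (n + 2)) :=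
  Finset.prod_range_succ _ _

theorem qfac_succ (r : ℂ) (n : ℕ) : qfac r (n + 1) = qfac r n * qnum r (n + 1) :=
  Finset.prod_range_succ _ _

theorem act_eta_adJ (hij : i ≠ j) (hc : qtil q i j = 1) {h : Fin θ → Fin θ → ℂ}
    (hh : h i j - q i j * h j i = 1) (b : ℕ) :
    act S (eta h) (adJ q i j b) = defect (q j j) b • gen θ j ^ b := by
  induction b with
  | zero => simp [adJ, act_eta_xw_pair hh, defect]
  | succ b ih =>
    rw [adJ, act_eta_bracket h (adJ_mem_goodSub hij hc b) (sigma_adJ b), ih,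
      defect_succ, mul_smul_comm, smul_mul_assoc, ← pow_succ, ← pow_succ', smul_smul, ← sub_smul]
    congr 1
    rw [qtil] at hc
    linear_combination (-(q j j : ℂ) ^ (b + 2) * defect (q j j) b) * hc

variable (S) in
theorem D_gen_pow (k : Fin θ) (n : ℕ) :
    D S k (gen θ k ^ (n + 1)) = qnum (q k k) (n + 1) • gen θ k ^ n := by
  induction n with
  | zero => simp [D_gen, qnum]
  | succ n ih =>
    rw [pow_succ, D_mul_gen, ih, if_pos rfl, smul_mul_assoc, ← pow_succ, smul_smul]
    have : qnum (q k k) (n + 2) = q k k * qnum (q k k) (n + 1) + 1 := by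
      simp only [qnum]
      rw [Finset.sum_range_succ' _ (n + 1), Finset.mul_sum, pow_zero]
      congr 1
      exact Finset.sum_congr rfl fun t _ => pow_succ' _ _
    rw [this, add_smul, one_smul]

variable (S) in
theorem pow_D_gen_pow (k : Fin θ) (n s : ℕ) :
    ∃ c : ℂ, (D S k ^ n) (gen θ k ^ (n + s)) = c • gen θ k ^ s := by
  induction n with
  | zero => exact ⟨1, by simp⟩
  | succ n ih =>
    obtain ⟨c, hc⟩ := ih
    exact ⟨qnum (q k k) (n + s + 1) * c, by
      rw [pow_succ, Module.End.mul_apply, show n + 1 + s = n + s + 1 by omega, D_gen_pow, map_smul,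
        hc, smul_smul]⟩

variable (S) in
theorem pow_D_gen_pow_self (k : Fin θ) (n : ℕ) :
    (D S k ^ n) (gen θ k ^ n) = qfac (q k k) n • 1 := by
  induction n with
  | zero => simp [qfac]
  | succ n ih =>
    rw [pow_succ (D S k), Module.End.mul_apply, D_gen_pow, map_smul, ih, smul_smul,
      qfac_succ, mul_comm]

variable (S) in
theorem D_gen_pow_of_ne {k l : Fin θ} (hkl : k ≠ l) (n : ℕ) : D S k (gen θ l ^ n) = 0 := by
  induction n with
  | zero => simp [D_one]
  | succ n ih => rw [pow_succ, D_mul_gen, ih, if_neg hkl]; simp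

variable (S) in
theorem pow_D_gen_mul {k l : Fin θ} (hkl : k ≠ l) (n : ℕ) (f : TV θ) :
    (D S k ^ n) (gen θ l * f) = gen θ l * (D S k ^ n) f := by
  induction n with
  | zero => simp
  | succ n ih =>
    rw [pow_succ', Module.End.mul_apply, ih, D_mul, D_gen, if_neg hkl, zero_mul, add_zero,
      Module.End.mul_apply]

variable (S) in
theorem pow_D_mul_gen {k l : Fin θ} (hkl : k ≠ l) (n : ℕ) (f : TV θ) :
    (D S k ^ n) (f * gen θ l) = (q k l : ℂ) ^ n • ((D S k ^ n) f * gen θ l) := by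
  induction n with
  | zero => simp
  | succ n ih =>
    rw [pow_succ', Module.End.mul_apply, ih, map_smul, D_mul_gen, if_neg hkl, add_zero, smul_smul,
      Module.End.mul_apply, pow_succ]

theorem pow_D_act_eta_adIJ (hij : i ≠ j) (hc : qtil q i j = 1) {h : Fin θ → Fin θ → ℂ}
    (hh : h i j - q i j * h j i = 1) (a b : ℕ) :
    (D S j ^ b) (act S (eta h) (adIJ q i j b a)) =
      (qfac (q j j) b * defect (q j j) b * defect (q i i) a) • gen θ i ^ a := by
  induction a with
  | zero =>
    rw [adIJ, act_eta_adJ hij hc hh, map_smul, pow_D_gen_pow_self, smul_smul]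
    simp [defect, mul_comm]
  | succ a ih =>
    rw [adIJ, act_eta_bracket h (adIJ_mem_goodSub hij hc a b) (sigma_adIJ a b), map_sub, map_smul,
      pow_D_gen_mul S hij.symm, pow_D_mul_gen S hij.symm, ih, defect_succ,
      mul_smul_comm, smul_mul_assoc, ← pow_succ, ← pow_succ', smul_smul, smul_smul, ← sub_smul]
    congr 1
    rw [qtil] at hc
    have hc' : (q i j : ℂ) ^ (b + 1) * q j i ^ (b + 1) = 1 := by rw [← mul_pow, hc, one_pow]
    linear_combination (-(q i i : ℂ) ^ (a + 2) * (qfac (q j j) b * defect (q j j) b *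
      defect (q i i) a)) * hc'

theorem opP_adIJ_self (hij : i ≠ j) (hc : qtil q i j = 1) {h : Fin θ → Fin θ → ℂ}
    (hh : h i j - q i j * h j i = 1) (a b : ℕ) :
    opP S i j h a b (adIJ q i j b a) =
      (qfac (q j j) b * defect (q j j) b * (qfac (q i i) a * defect (q i i) a)) • 1 := by
  rw [opP, LinearMap.comp_apply, LinearMap.comp_apply, pow_D_act_eta_adIJ hij hc hh, map_smul,
    pow_D_gen_pow_self, smul_smul]
  congr 1
  ring

theorem opP_adIJ_of_lt (hij : i ≠ j) (hc : qtil q i j = 1) {h : Fin θ → Fin θ → ℂ}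
    (hh : h i j - q i j * h j i = 1) (a a' : ℕ) {b b' : ℕ} (hb : b' < b) :
    opP S i j h a b (adIJ q i j b' a') = 0 := by
  obtain ⟨t, rfl⟩ : ∃ t, b = t + 1 + b' := ⟨b - b' - 1, by omega⟩
  rw [opP, LinearMap.comp_apply, LinearMap.comp_apply, pow_add, Module.End.mul_apply,
    pow_D_act_eta_adIJ hij hc hh, pow_succ, Module.End.mul_apply, map_smul, D_gen_pow_of_ne S
    hij.symm]
  simp

theorem opP_adJ_of_le (hij : i ≠ j) (hc : qtil q i j = 1) {h : Fin θ → Fin θ → ℂ}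
    (hh : h i j - q i j * h j i = 1) {a : ℕ} (ha : 1 ≤ a) {b b' : ℕ} (hb : b' ≤ b) :
    opP S i j h a b' (adJ q i j b) = 0 := by
  obtain ⟨t, rfl⟩ : ∃ t, b = b' + t := ⟨b - b', by omega⟩
  obtain ⟨s, rfl⟩ : ∃ s, a = s + 1 := ⟨a - 1, by omega⟩
  obtain ⟨c, hc'⟩ := pow_D_gen_pow S j b' t
  rw [opP, LinearMap.comp_apply, LinearMap.comp_apply, act_eta_adJ hij hc hh, map_smul, hc',
    pow_succ, Module.End.mul_apply, map_smul, map_smul, map_smul, D_gen_pow_of_ne S hij]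
  simp

theorem defect_ne_zero {r : ℂ} {n : ℕ} (h : ∀ t < n, r ^ (t + 2) ≠ 1) : defect r n ≠ 0 :=
  Finset.prod_ne_zero_iff.2 fun t ht => sub_ne_zero.2 (h t (Finset.mem_range.1 ht)).symm

theorem qnum_mul (r : ℂ) (m : ℕ) : qnum r m * (r - 1) = r ^ m - 1 := geom_sum_mul r m

theorem qfac_ne_zero {r : ℂ} {n : ℕ} (h : ∀ t < n, r ^ (t + 2) ≠ 1) : qfac r n ≠ 0 := by
  refine Finset.prod_ne_zero_iff.2 fun t ht h0 => ?_
  have ht := Finset.mem_range.1 ht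
  cases t with
  | zero => simp [qnum] at h0
  | succ t =>
    refine h t (by omega) (sub_eq_zero.1 ?_)
    rw [← qnum_mul, h0, zero_mul]

theorem bracket_mem_Wfil {z : TV θ} {n : ℕ} (hz : z ∈ Wfil θ n) (l : Fin θ) (c : ℂ) :
    gen θ l * z - c • (z * gen θ l) ∈ Wfil θ (n + 1) := by
  have h := mul_mem_Wfil (gen_mem_Wfil l) hz
  rw [add_comm] at h
  exact sub_mem h (Submodule.smul_mem _ _ (mul_mem_Wfil hz (gen_mem_Wfil l)))

theorem adIJ_mem_Wfil (a b : ℕ) : adIJ q i j b a ∈ Wfil θ (b + 2 + a) := by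
  induction a with
  | zero =>
    induction b with
    | zero =>
      rw [adIJ, adJ, xw_pair]
      exact bracket_mem_Wfil (gen_mem_Wfil j) i _
    | succ b ih => exact bracket_mem_Wfil ih j _
  | succ a ih => exact bracket_mem_Wfil ih i _

theorem coef_nil_gen (l : Fin θ) : coef [] (gen θ l) = 0 := by
  simpa using coef_nil_mul_gen (1 : TV θ) l

theorem coef_nil_adJ (b : ℕ) : coef [] (adJ q i j b) = 0 := by
  cases b <;> simp [adJ, xw_pair, coef_nil_mul, coef_nil_gen]

theorem coef_nil_adIJ (a b : ℕ) : coef [] (adIJ q i j b a) = 0 := by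
  cases a <;> simp [adIJ, coef_nil_adJ, coef_nil_mul, coef_nil_gen]

end Elements

section Pairs

variable {θ : ℕ} {q : Fin θ → Fin θ → ℂˣ} {S : BraidedStr θ q} {I : Submodule ℂ (TV θ)}
  {i j : Fin θ}

/-- The braiding matrix of the pair `x_k`, `(ad_c x_j)^b x_{ij}`. -/
def matA (q : Fin θ → Fin θ → ℂˣ) (i j k : Fin θ) (b : ℕ) : Fin 2 → Fin 2 → ℂˣ :=
  ![![q k k, q k i * q k j ^ (b + 1)],
    ![q i k * q j k ^ (b + 1),
      (q i i * q i j ^ (b + 1)) * (q j i * q j j ^ (b + 1)) ^ (b + 1)]]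

theorem finiteRootSystem_matA (hAAH : AAH) (hI : IsPreNicholsIdeal S I) (hGK : FinGK I)
    (hij : i ≠ j) (hc : qtil q i j = 1) (hx : xw q [i, j] ∉ I) {k : Fin θ} (hkj : k ≠ j)
    (hk : qtil q i k * qtil q j k ≠ 1) {b : ℕ} (hr : ∀ t < b, (q j j : ℂ) ^ (t + 2) ≠ 1) :
    FiniteRootSystem (matA q i j k b) := by
  obtain ⟨h, hkk, hh, hη⟩ := exists_eta hI hij hc hx k hk
  set κ : ℂ := qfac (q j j) b * defect (q j j) b * (qfac (q i i) 0 * defect (q i i) 0) with hκ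
  have hκ0 : κ ≠ 0 := by
    rw [hκ]
    simpa [qfac, defect] using ⟨qfac_ne_zero hr, defect_ne_zero hr⟩
  have hX : ({k} : Set (Fin θ)).Subsingleton := Set.subsingleton_singleton
  have hhX : ∀ m ∈ ({k} : Set (Fin θ)), h m m = 0 := by rintro _ rfl; exact hkk
  have hjX : j ∉ ({k} : Set (Fin θ)) := fun e => hkj e.symm
  have hgen : gen θ k ∈ goodSub S i j {k} := gen_mem_goodSub rfl
  have hZ0 : adJ q i j b ∈ goodSub S i j ∅ := adJ_mem_goodSub hij hc b
  have hZ : adJ q i j b ∈ goodSub S i j {k} := goodSub_empty_le hZ0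
  refine finiteRootSystem_of_operators hAAH hI hGK _ ![gen θ k, adJ q i j b]
    ![D S k, κ⁻¹ • opP S i j h 0 b] (goodSub S i j {k}) (e := b + 2) ?_ ?_ ?_ ?_
    one_mem_goodSub ?_ ?_
  · refine Fin.forall_fin_two.2 ⟨Wfil_mono (by omega) (gen_mem_Wfil k), adIJ_mem_Wfil 0 b⟩
  · exact Fin.forall_fin_two.2 ⟨coef_nil_gen k, coef_nil_adJ b⟩
  · exact Fin.forall_fin_two.2 ⟨fun x hx => D_mem hI k hx,
      fun x hx => Submodule.smul_mem _ _ (opP_mem hI hη 0 b hx)⟩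
  · exact Fin.forall_fin_two.2 ⟨D_one S k, by simp [opP_one]⟩
  · intro w hw
    exact Fin.forall_fin_two.2 ⟨mul_mem_goodSub hw hgen, mul_mem_goodSub hw hZ⟩
  · refine Fin.forall_fin_two.2 ⟨Fin.forall_fin_two.2 ⟨fun w hw => ?_, fun w hw => ?_⟩,
      Fin.forall_fin_two.2 ⟨fun w hw => ?_, fun w hw => ?_⟩⟩
    · simpa [matA] using D_mul_gen S k w k
    · have := D_mul S k w (adJ q i j b)
      rw [hZ0.1 k (by simp), sigma_adJ] at this
      simpa [matA] using this
    · have := opP_mul hX hhX (a := 0) (b := b) (Or.inl rfl) hjX (fun l => sigma_gen l k) hw hgen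
      rw [opP_gen] at this
      simp [matA, this, smul_smul, mul_comm]
    · have := opP_mul hX hhX (a := 0) (b := b) (Or.inl rfl) hjX (sigma_adJ b) hw hZ
      have hself : opP S i j h 0 b (adJ q i j b) = κ • 1 := opP_adIJ_self hij hc hh 0 b
      rw [hself] at this
      simp only [matA, Matrix.cons_val_one, LinearMap.smul_apply, this, smul_add, smul_smul,
        mul_smul_comm, mul_one, inv_mul_cancel₀ hκ0, one_smul, if_pos, smul_mul_assoc,
        Matrix.cons_val_fin_one]
      rw [add_comm]
      congr 2
      push_cast
      ring

/-- The value of the bicharacter on `m α_i + n α_j` and `m' α_i + n' α_j`. -/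
def bichar (q : Fin θ → Fin θ → ℂˣ) (i j : Fin θ) (m n m' n' : ℕ) : ℂˣ :=
  (q i i ^ m' * q i j ^ n') ^ m * (q j i ^ m' * q j j ^ n') ^ n

/-- The braiding matrix of the pair `(ad_c x_j)^b x_{ij}`, `(ad_c x_i)^a (ad_c x_j)^{b'} x_{ij}`. -/
def matB (q : Fin θ → Fin θ → ℂˣ) (i j : Fin θ) (b a b' : ℕ) : Fin 2 → Fin 2 → ℂˣ :=
  ![![bichar q i j 1 (b + 1) 1 (b + 1), bichar q i j 1 (b + 1) (a + 1) (b' + 1)],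
    ![bichar q i j (a + 1) (b' + 1) 1 (b + 1), bichar q i j (a + 1) (b' + 1) (a + 1) (b' + 1)]]

theorem finiteRootSystem_matB (hAAH : AAH) (hI : IsPreNicholsIdeal S I) (hGK : FinGK I)
    (hij : i ≠ j) (hc : qtil q i j = 1) (hx : xw q [i, j] ∉ I) {a b b' : ℕ} (ha : 1 ≤ a)
    (hb : b' < b) (hp : ∀ t < a, (q i i : ℂ) ^ (t + 2) ≠ 1)
    (hr : ∀ t < b, (q j j : ℂ) ^ (t + 2) ≠ 1) :
    FiniteRootSystem (matB q i j b a b') := by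
  obtain ⟨h, -, hh, hη⟩ := exists_eta hI hij hc hx i (by
    have : qtil q j i = 1 := by rw [← hc, qtil, qtil, mul_comm]
    rw [this, mul_one, qtil, ← sq]
    exact hp 0 ha)
  have hr' : ∀ t < b', (q j j : ℂ) ^ (t + 2) ≠ 1 := fun t ht => hr t (ht.trans hb)
  let κ : ℕ → ℕ → ℂ := fun a b =>
    qfac (q j j) b * defect (q j j) b * (qfac (q i i) a * defect (q i i) a)
  have hκ0 : κ 0 b ≠ 0 := by
    simpa [κ, qfac, defect] using ⟨qfac_ne_zero hr, defect_ne_zero hr⟩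
  have hκ1 : κ a b' ≠ 0 :=
    mul_ne_zero (mul_ne_zero (qfac_ne_zero hr') (defect_ne_zero hr'))
      (mul_ne_zero (qfac_ne_zero hp) (defect_ne_zero hp))
  have hZ : ∀ a b, adIJ q i j b a ∈ goodSub S i j ∅ := fun a b => adIJ_mem_goodSub hij hc a b
  have key : ∀ {a b a' b' : ℕ} {w : TV θ} {c : ℂ}, w ∈ goodSub S i j ∅ →
      opP S i j h a b (adIJ q i j b' a') = c • 1 → ∀ κ : ℂ,
      (κ⁻¹ • opP S i j h a b) (w * adIJ q i j b' a') =
        (bichar q i j (a + 1) (b + 1) (a' + 1) (b' + 1) : ℂ) •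
          ((κ⁻¹ • opP S i j h a b) w * adIJ q i j b' a') + (κ⁻¹ * c) • w := by
    intro a b a' b' w c hw hval κ
    rw [LinearMap.smul_apply, opP_mul Set.subsingleton_empty (by simp) (Or.inr (by simp)) (by simp)
      (sigma_adIJ a' b') hw (hZ a' b'), hval]
    simp only [LinearMap.smul_apply, smul_add, smul_smul, smul_mul_assoc, mul_smul_comm, mul_one,
      bichar]
    push_cast
    rw [add_comm]
    congr 2
    ring
  refine finiteRootSystem_of_operators hAAH hI hGK _ ![adIJ q i j b 0, adIJ q i j b' a]
    ![(κ 0 b)⁻¹ • opP S i j h 0 b, (κ a b')⁻¹ • opP S i j h a b'] (goodSub S i j ∅)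
    (e := b + 2 + a) ?_ ?_ ?_ ?_ one_mem_goodSub ?_ ?_
  · exact Fin.forall_fin_two.2 ⟨Wfil_mono (by omega) (adIJ_mem_Wfil 0 b),
      Wfil_mono (by omega) (adIJ_mem_Wfil a b')⟩
  · exact Fin.forall_fin_two.2 ⟨coef_nil_adIJ 0 b, coef_nil_adIJ a b'⟩
  · exact Fin.forall_fin_two.2 ⟨fun x hx => Submodule.smul_mem _ _ (opP_mem hI hη 0 b hx),
      fun x hx => Submodule.smul_mem _ _ (opP_mem hI hη a b' hx)⟩
  · exact Fin.forall_fin_two.2 ⟨by simp [opP_one], by simp [opP_one]⟩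
  · intro w hw
    exact Fin.forall_fin_two.2 ⟨mul_mem_goodSub hw (hZ 0 b), mul_mem_goodSub hw (hZ a b')⟩
  · have hz : ∀ x : TV θ, x = 0 → x = (0 : ℂ) • 1 := fun x hx => by rw [hx, zero_smul]
    refine Fin.forall_fin_two.2 ⟨Fin.forall_fin_two.2 ⟨fun w hw => ?_, fun w hw => ?_⟩,
      Fin.forall_fin_two.2 ⟨fun w hw => ?_, fun w hw => ?_⟩⟩
    · have := key hw (opP_adIJ_self hij hc hh 0 b) (κ 0 b)
      rwa [inv_mul_cancel₀ hκ0, one_smul] at this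
    · have := key hw (hz _ (opP_adIJ_of_lt hij hc hh 0 a hb)) (κ 0 b)
      rwa [mul_zero, zero_smul] at this
    · have := key (a' := 0) hw (hz _ (opP_adJ_of_le hij hc hh ha hb.le)) (κ a b')
      rwa [mul_zero, zero_smul] at this
    · have := key hw (opP_adIJ_self hij hc hh a b') (κ a b')
      rwa [inv_mul_cancel₀ hκ1, one_smul] at this

end Pairs

section RankTwo

variable {p : Fin 2 → Fin 2 → ℂˣ}

theorem qtil_comm {θ : ℕ} (q : Fin θ → Fin θ → ℂˣ) (i j : Fin θ) : qtil q i j = qtil q j i :=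
  mul_comm _ _

theorem qnum_eq_zero_iff {r : ℂ} (hr : r ≠ 1) (m : ℕ) : qnum r m = 0 ↔ r ^ m = 1 := by
  have h := qnum_mul r m
  constructor
  · intro h0
    rw [h0, zero_mul] at h
    exact (sub_eq_zero.1 h.symm)
  · intro h1
    rw [h1, sub_self] at h
    exact (mul_eq_zero.1 h).resolve_right (sub_ne_zero.2 hr)

theorem FiniteRootSystem.cSet_nonempty {θ : ℕ} {q : Fin θ → Fin θ → ℂˣ} (h : FiniteRootSystem q)
    {i j : Fin θ} (hij : j ≠ i) : (cSet q i j).Nonempty :=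
  h.1 q i ⟨_, ReachRoot.simple i⟩ j hij

theorem not_finiteRootSystem_of_label_one {θ : ℕ} {q : Fin θ → Fin θ → ℂˣ} {i j : Fin θ}
    (hij : j ≠ i) (h1 : q i i = 1) (he : qtil q i j ≠ 1) : ¬ FiniteRootSystem q := by
  intro h
  obtain ⟨n, hn⟩ := h.cSet_nonempty hij
  simp only [cSet, h1, qnum, Units.val_one, one_pow, Finset.sum_const, Finset.card_range,
    nsmul_eq_mul, mul_one, one_mul, Set.mem_ofPred_eq, mul_eq_zero, sub_eq_zero] at hn
  rcases hn with hn | hn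
  · exact Nat.cast_ne_zero.2 n.succ_ne_zero hn
  · exact he hn.symm

theorem mem_cSet_iff_of_qtil_eq_sq {θ : ℕ} {q : Fin θ → Fin θ → ℂˣ} {i j : Fin θ}
    (h1 : q i i ≠ 1) (he : qtil q i j = (q i i : ℂ) ^ 2) (n : ℕ) :
    n ∈ cSet q i j ↔ q i i ^ (n + 1) = 1 ∨ q i i ^ (n + 2) = 1 := by
  rw [cSet, Set.mem_ofPred_eq, mul_eq_zero, qnum_eq_zero_iff (by simpa using h1), he, ← pow_add,
    sub_eq_zero, eq_comm (a := (1 : ℂ)), ← Units.val_pow_eq_pow_val, ← Units.val_pow_eq_pow_val,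
    Units.val_eq_one, Units.val_eq_one]

theorem not_finiteRootSystem_of_infinite_order {θ : ℕ} {q : Fin θ → Fin θ → ℂˣ} {i j : Fin θ}
    (hij : j ≠ i) (h0 : orderOf (q i i) = 0) (he : qtil q i j = (q i i : ℂ) ^ 2) :
    ¬ FiniteRootSystem q := by
  intro h
  obtain ⟨n, hn⟩ := h.cSet_nonempty hij
  have hpow : ∀ m : ℕ, q i i ^ (m + 1) ≠ 1 := fun m hm =>
    orderOf_eq_zero_iff'.1 h0 (m + 1) m.succ_pos hm
  rw [mem_cSet_iff_of_qtil_eq_sq (by simpa using hpow 0) he] at hn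
  exact hn.elim (hpow n) (hpow (n + 1))

theorem sInf_cSet_of_qtil_eq_sq {θ : ℕ} {q : Fin θ → Fin θ → ℂˣ} {i j : Fin θ}
    (h3 : 3 ≤ orderOf (q i i)) (he : qtil q i j = (q i i : ℂ) ^ 2) :
    sInf (cSet q i j) = orderOf (q i i) - 2 := by
  have h1 : q i i ≠ 1 := by
    intro h
    rw [h, orderOf_one] at h3
    omega
  refine IsLeast.csInf_eq ⟨?_, fun n hn => ?_⟩
  · rw [mem_cSet_iff_of_qtil_eq_sq h1 he]
    right
    rw [show orderOf (q i i) - 2 + 2 = orderOf (q i i) by omega, pow_orderOf_eq_one]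
  · rw [mem_cSet_iff_of_qtil_eq_sq h1 he] at hn
    rcases hn with hn | hn
    · have := Nat.le_of_dvd n.succ_pos (orderOf_dvd_of_pow_eq_one hn)
      omega
    · have := Nat.le_of_dvd (by omega) (orderOf_dvd_of_pow_eq_one hn)
      omega

/-- The braiding matrices `p` and `p'` have the same Dynkin diagram. -/
def SameDiagram (p p' : Fin 2 → Fin 2 → ℂˣ) : Prop :=
  p' 0 0 = p 0 0 ∧ p' 1 1 = p 1 1 ∧ p' 0 1 * p' 1 0 = p 0 1 * p 1 0

theorem SameDiagram.cSet_zero_one {p p' : Fin 2 → Fin 2 → ℂˣ} (h : SameDiagram p p') :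
    cSet p' 0 1 = cSet p 0 1 := by
  have : qtil p' 0 1 = qtil p 0 1 := by simpa [qtil] using congrArg Units.val h.2.2
  simp [cSet, h.1, this]

theorem SameDiagram.cSet_one_zero {p p' : Fin 2 → Fin 2 → ℂˣ} (h : SameDiagram p p') :
    cSet p' 1 0 = cSet p 1 0 := by
  have : qtil p' 1 0 = qtil p 1 0 := by
    rw [qtil_comm p', qtil_comm p]
    simpa [qtil] using congrArg Units.val h.2.2
  simp [cSet, h.2.1, this]

/-- The reflection formulas of a braiding of Cartan type: if `u ^ A * e = 1`, where `e` is the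
label of the edge, then the reflection at the vertex `u` preserves the diagram. -/
theorem cartan_reflect {G : Type*} [CommGroup G] (u v x y : G) (A : ℕ) (h : u ^ A * (x * y) = 1) :
    u * u ^ (-2 : ℤ) * u ^ (-2 : ℤ) * u ^ (4 : ℤ) = u ∧
    v * y ^ (A : ℤ) * x ^ (A : ℤ) * u ^ ((A : ℤ) * A) = v ∧
    (x * u ^ (A : ℤ) * x ^ (-2 : ℤ) * u ^ (-(2 * A) : ℤ)) *
      (y * y ^ (-2 : ℤ) * u ^ (A : ℤ) * u ^ (-(2 * A) : ℤ)) = x * y := by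
  refine ⟨by group, ?_, ?_⟩
  · calc v * y ^ (A : ℤ) * x ^ (A : ℤ) * u ^ ((A : ℤ) * A)
        = v * (u ^ A * (x * y)) ^ A := by
          simp only [zpow_mul, zpow_natCast, mul_pow]
          apply Additive.ofMul.injective
          simp only [ofMul_mul]
          abel
      _ = v := by rw [h, one_pow, mul_one]
  · have hu : u ^ (A : ℤ) = (x * y)⁻¹ := by
      rw [zpow_natCast]
      exact eq_inv_of_mul_eq_one_left h
    have h2 : u ^ (-(2 * A) : ℤ) = (x * y) ^ (2 : ℤ) := by
      rw [show (-(2 * A) : ℤ) = (A : ℤ) * (-2) by ring, zpow_mul, hu, inv_zpow', neg_neg]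
    rw [h2, hu]
    apply Additive.ofMul.injective
    simp only [ofMul_mul, ofMul_zpow, ofMul_inv]
    abel

theorem SameDiagram.reflect_zero {p p' : Fin 2 → Fin 2 → ℂˣ} (h : SameDiagram p p')
    (hA : p 0 0 ^ sInf (cSet p 0 1) * (p 0 1 * p 1 0) = 1) :
    SameDiagram p (reflectMat p' 0) := by
  have hA' : p' 0 0 ^ sInf (cSet p 0 1) * (p' 0 1 * p' 1 0) = 1 := by rw [h.1, h.2.2, hA]
  obtain ⟨e1, e2, e3⟩ := cartan_reflect _ (p' 1 1) _ _ _ hA'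
  refine ⟨?_, ?_, ?_⟩
  · rw [← h.1, ← e1]
    simp [reflectMat, cij]
  · rw [← h.2.1, ← e2]
    simp [reflectMat, cij, h.cSet_zero_one]
  · rw [← h.2.2, ← e3]
    simp [reflectMat, cij, h.cSet_zero_one, mul_comm]

theorem SameDiagram.reflect_one {p p' : Fin 2 → Fin 2 → ℂˣ} (h : SameDiagram p p')
    (ha : p 1 1 ^ sInf (cSet p 1 0) * (p 0 1 * p 1 0) = 1) :
    SameDiagram p (reflectMat p' 1) := by
  have ha' : p' 1 1 ^ sInf (cSet p 1 0) * (p' 1 0 * p' 0 1) = 1 := by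
    rw [h.2.1, mul_comm (p' 1 0), h.2.2, ha]
  obtain ⟨e1, e2, e3⟩ := cartan_reflect _ (p' 0 0) _ _ _ ha'
  refine ⟨?_, ?_, ?_⟩
  · rw [← h.1, ← e2]
    simp [reflectMat, cij, h.cSet_one_zero]
  · rw [← h.2.1, ← e1]
    simp [reflectMat, cij]
  · rw [← h.2.2, mul_comm (p' 0 1), ← e3, mul_comm]
    simp [reflectMat, cij, h.cSet_one_zero, mul_comm]

theorem sRefl_zero_zero (β : Fin 2 → ℤ) :
    sRefl p 0 β 0 = sInf (cSet p 0 1) * β 1 - β 0 := by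
  simp [sRefl, cij, Fin.sum_univ_two]
  ring

theorem sRefl_zero_one (β : Fin 2 → ℤ) : sRefl p 0 β 1 = β 1 := by
  simp [sRefl]

theorem sRefl_one_one (β : Fin 2 → ℤ) :
    sRefl p 1 β 1 = sInf (cSet p 1 0) * β 0 - β 1 := by
  simp [sRefl, cij, Fin.sum_univ_two]
  ring

theorem sRefl_one_zero (β : Fin 2 → ℤ) : sRefl p 1 β 0 = β 0 := by
  simp [sRefl]

/-- A rank two braiding of Cartan type which is not of finite Cartan type has infinitely many
real roots. -/
theorem not_finiteRootSystem_of_cartan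
    (hA : p 0 0 ^ sInf (cSet p 0 1) * (p 0 1 * p 1 0) = 1)
    (ha : p 1 1 ^ sInf (cSet p 1 0) * (p 0 1 * p 1 0) = 1)
    (h4 : 4 ≤ sInf (cSet p 0 1) * sInf (cSet p 1 0)) : ¬ FiniteRootSystem p := by
  rintro ⟨-, hfin⟩
  obtain ⟨B, hB⟩ := (hfin.image fun β => β 0).bddAbove
  set A : ℤ := ((sInf (cSet p 0 1) : ℕ) : ℤ) with hAdef
  set a : ℤ := ((sInf (cSet p 1 0) : ℕ) : ℤ) with hadef
  have h4' : 4 ≤ A * a := by rw [hAdef, hadef]; exact_mod_cast h4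
  have hA0 : 0 ≤ A := Int.natCast_nonneg _
  have ha0 : 0 ≤ a := Int.natCast_nonneg _
  have hApos : 0 < A := hA0.lt_of_ne fun h => by simp [← h] at h4'
  have hapos : 0 < a := ha0.lt_of_ne fun h => by simp [← h] at h4'
  have key : ∀ n : ℕ, ∃ p' β, ReachRoot p p' β ∧ SameDiagram p p' ∧
      (n : ℤ) ≤ β 0 ∧ 0 ≤ β 1 ∧ 2 * β 0 < A * β 1 := by
    intro n
    induction n with
    | zero => exact ⟨p, _, ReachRoot.simple 1, ⟨rfl, rfl, rfl⟩, by simp, by simp, by simpa⟩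
    | succ n ih =>
      obtain ⟨p', β, hβ, hp', h0, h1, h2⟩ := ih
      have hp'' := hp'.reflect_zero hA
      refine ⟨_, _, (hβ.reflect 0).reflect 1, hp''.reflect_one ha, ?_⟩
      rw [sRefl_one_one, sRefl_one_zero, sRefl_zero_zero, sRefl_zero_one, hp'.cSet_zero_one,
        hp''.cSet_one_zero, ← hAdef, ← hadef]
      set x := β 0
      set y := β 1
      have hx' : x < A * y - x := by linarith
      have hy' : 2 * y < a * (A * y - x) := by
        nlinarith [mul_pos hapos (sub_pos.2 h2), mul_nonneg (sub_nonneg.2 h4') h1]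
      have hxx : 0 ≤ A * y - x := by linarith [Int.natCast_nonneg n]
      refine ⟨by push_cast; linarith, by linarith, ?_⟩
      nlinarith [mul_pos hApos (sub_pos.2 hy'), mul_nonneg (sub_nonneg.2 h4') hxx]
  obtain ⟨p', β, hβ, -, hn, -⟩ := key (B.toNat + 1)
  have := hB ⟨β, ⟨p', hβ⟩, rfl⟩
  have h' := Int.self_le_toNat B
  push_cast at hn
  simp only at this
  linarith

theorem not_finiteRootSystem_of_qtil_eq_sq (h0 : 3 ≤ orderOf (p 0 0)) (h1 : 3 ≤ orderOf (p 1 1))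
    (he0 : p 0 1 * p 1 0 = p 0 0 ^ 2) (he1 : p 0 1 * p 1 0 = p 1 1 ^ 2)
    (h4 : 4 ≤ (orderOf (p 0 0) - 2) * (orderOf (p 1 1) - 2)) : ¬ FiniteRootSystem p := by
  have e0 : sInf (cSet p 0 1) = orderOf (p 0 0) - 2 :=
    sInf_cSet_of_qtil_eq_sq h0 (by simpa [qtil] using congrArg Units.val he0)
  have e1 : sInf (cSet p 1 0) = orderOf (p 1 1) - 2 :=
    sInf_cSet_of_qtil_eq_sq h1 (by
      rw [qtil_comm]
      simpa [qtil] using congrArg Units.val he1)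
  apply not_finiteRootSystem_of_cartan
  · rw [e0, he0, ← pow_add, show orderOf (p 0 0) - 2 + 2 = orderOf (p 0 0) by omega,
      pow_orderOf_eq_one]
  · rw [e1, he1, ← pow_add, show orderOf (p 1 1) - 2 + 2 = orderOf (p 1 1) by omega,
      pow_orderOf_eq_one]
  · rwa [e0, e1]

theorem sInf_cSet_eq_two {θ : ℕ} {q : Fin θ → Fin θ → ℂˣ} {i j : Fin θ} (h2 : q i i ^ 2 ≠ 1)
    (he : (q i i : ℂ) ^ 2 * qtil q i j = 1) : sInf (cSet q i j) = 2 := by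
  have h2' : (q i i : ℂ) ^ 2 ≠ 1 := by
    rwa [← Units.val_pow_eq_pow_val, Ne, Units.val_eq_one]
  have h1 : (q i i : ℂ) ≠ 1 := fun h => h2' (by rw [h, one_pow])
  refine IsLeast.csInf_eq ⟨?_, fun n hn => ?_⟩
  · simp [cSet, he]
  · by_contra! hlt
    rw [cSet, Set.mem_ofPred_eq, mul_eq_zero, qnum_eq_zero_iff h1, sub_eq_zero] at hn
    interval_cases n
    · rcases hn with hn | hn
      · exact h1 (by simpa using hn)
      · rw [pow_zero, one_mul] at hn
        rw [← hn, mul_one] at he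
        exact h2' he
    · rcases hn with hn | hn
      · exact h2' hn
      · rw [pow_one] at hn
        rw [sq, mul_assoc, ← hn, mul_one] at he
        exact h1 he

theorem not_finiteRootSystem_of_affine (h : p 1 1 = p 0 0) (h2 : p 0 0 ^ 2 ≠ 1)
    (he : p 0 0 ^ 2 * (p 0 1 * p 1 0) = 1) : ¬ FiniteRootSystem p := by
  have he' : (p 0 0 : ℂ) ^ 2 * qtil p 0 1 = 1 := by
    simpa [qtil] using congrArg Units.val he
  have e0 : sInf (cSet p 0 1) = 2 := sInf_cSet_eq_two h2 he'
  have e1 : sInf (cSet p 1 0) = 2 := sInf_cSet_eq_two (by rwa [h]) (by rwa [h, qtil_comm])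
  apply not_finiteRootSystem_of_cartan
  · rwa [e0]
  · rwa [e1, h]
  · rw [e0, e1]

end RankTwo

section Cases

variable {θ : ℕ} {q : Fin θ → Fin θ → ℂˣ} {S : BraidedStr θ q} {I : Submodule ℂ (TV θ)}
  {i j : Fin θ}

theorem mul_eq_one_of_qtil (hc : qtil q i j = 1) : q i j * q j i = 1 :=
  Units.ext (by simpa [qtil] using hc)

theorem val_pow_ne_one {u : ℂˣ} {n : ℕ} (h : u ^ n ≠ 1) : (u : ℂ) ^ n ≠ 1 := by
  rwa [← Units.val_pow_eq_pow_val, Ne, Units.val_eq_one]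

theorem bichar_self (hc : qtil q i j = 1) (m n : ℕ) :
    bichar q i j m n m n = q i i ^ (m * m) * q j j ^ (n * n) := by
  calc bichar q i j m n m n
      = q i i ^ (m * m) * q j j ^ (n * n) * (q i j * q j i) ^ (m * n) := by
        simp only [bichar, mul_pow, ← pow_mul, mul_comm n m]
        apply Additive.ofMul.injective
        simp only [ofMul_mul]
        abel
    _ = _ := by rw [mul_eq_one_of_qtil hc, one_pow, mul_one]

theorem bichar_mul_bichar (hc : qtil q i j = 1) (m n m' n' : ℕ) :
    bichar q i j m n m' n' * bichar q i j m' n' m n =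
      q i i ^ (2 * (m * m')) * q j j ^ (2 * (n * n')) := by
  calc bichar q i j m n m' n' * bichar q i j m' n' m n
      = (q i i ^ (m * m') * q i i ^ (m * m')) * (q j j ^ (n * n') * q j j ^ (n * n')) *
          (q i j * q j i) ^ (m * n') * (q i j * q j i) ^ (n * m') := by
        simp only [bichar, mul_pow, ← pow_mul, mul_comm m' m, mul_comm n' n, mul_comm n' m,
          mul_comm m' n]
        apply Additive.ofMul.injective
        simp only [ofMul_mul]
        abel
    _ = _ := by
        rw [mul_eq_one_of_qtil hc, one_pow, one_pow, mul_one, mul_one, ← pow_add, ← pow_add,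
          two_mul, two_mul]

theorem matA_one_one (hc : qtil q i j = 1) (k : Fin θ) (b : ℕ) :
    matA q i j k b 1 1 = q i i * q j j ^ ((b + 1) * (b + 1)) := by
  have := bichar_self hc 1 (b + 1)
  simpa [bichar, matA] using this

theorem matA_edge (hc : qtil q i j = 1) (b : ℕ) :
    matA q i j i b 0 1 * matA q i j i b 1 0 = q i i ^ 2 := by
  calc matA q i j i b 0 1 * matA q i j i b 1 0
      = q i i ^ 2 * (q i j * q j i) ^ (b + 1) := by
        simp only [matA, Matrix.cons_val_zero, Matrix.cons_val_one, Matrix.cons_val_fin_one,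
          mul_pow, sq]
        apply Additive.ofMul.injective
        simp only [ofMul_mul]
        abel
    _ = _ := by rw [mul_eq_one_of_qtil hc, one_pow, mul_one]

theorem matB_edge (hc : qtil q i j = 1) (b a b' : ℕ) :
    matB q i j b a b' 0 1 * matB q i j b a b' 1 0 =
      q i i ^ (2 * (a + 1)) * q j j ^ (2 * ((b + 1) * (b' + 1))) := by
  simpa [matB] using bichar_mul_bichar hc 1 (b + 1) (a + 1) (b' + 1)

theorem not_finiteRootSystem_of_one_one_eq_one {p : Fin 2 → Fin 2 → ℂˣ} (h1 : p 1 1 = 1)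
    (he : p 0 1 * p 1 0 ≠ 1) : ¬ FiniteRootSystem p := by
  refine not_finiteRootSystem_of_label_one (i := 1) (j := 0) (by decide) h1 fun h => he ?_
  exact mul_eq_one_of_qtil (by rwa [qtil_comm] at h)

/-- The situation that is to be excluded: `x_{ij}` is a nonzero element of a pre-Nichols algebra
of finite Gelfand–Kirillov dimension, although `q̃_{ij} = 1`. -/
structure NonzeroPair (S : BraidedStr θ q) (I : Submodule ℂ (TV θ)) (i j : Fin θ) : Prop where
  aah : AAH
  ideal : IsPreNicholsIdeal S I
  finGK : FinGK I
  ne : i ≠ j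
  qtil_eq : qtil q i j = 1
  notMem : xw q [i, j] ∉ I

namespace NonzeroPair

theorem symm (h : NonzeroPair S I i j) : NonzeroPair S I j i := by
  refine ⟨h.aah, h.ideal, h.finGK, h.ne.symm, by rw [qtil_comm, h.qtil_eq], fun hx => h.notMem ?_⟩
  have e : xw q [i, j] = -(q i j : ℂ) • xw q [j, i] := by
    have h1 : (q i j : ℂ) * (q j i : ℂ) = 1 := h.qtil_eq
    rw [xw_pair, xw_pair, smul_sub, smul_smul, neg_mul, h1]
    module
  rw [e]
  exact Submodule.smul_mem _ _ hx

theorem finite_matA (h : NonzeroPair S I i j) (h2 : q i i ^ 2 ≠ 1) {b : ℕ}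
    (hr : ∀ t < b, q j j ^ (t + 2) ≠ 1) : FiniteRootSystem (matA q i j i b) := by
  refine finiteRootSystem_matA h.aah h.ideal h.finGK h.ne h.qtil_eq h.notMem h.ne ?_
    fun t ht => val_pow_ne_one (hr t ht)
  rw [← qtil_comm q i j, h.qtil_eq, mul_one, qtil, ← sq]
  exact val_pow_ne_one h2

theorem finite_matB (h : NonzeroPair S I i j) {a b b' : ℕ} (ha : 1 ≤ a) (hb : b' < b)
    (hp : ∀ t < a, q i i ^ (t + 2) ≠ 1) (hr : ∀ t < b, q j j ^ (t + 2) ≠ 1) :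
    FiniteRootSystem (matB q i j b a b') :=
  finiteRootSystem_matB h.aah h.ideal h.finGK h.ne h.qtil_eq h.notMem ha hb
    (fun t ht => val_pow_ne_one (hp t ht)) fun t ht => val_pow_ne_one (hr t ht)

theorem qtil_mul_qtil_eq_one (h : NonzeroPair S I i j) (hs : q i i * q j j = 1) {k : Fin θ}
    (hkj : k ≠ j) : qtil q i k * qtil q j k = 1 := by
  by_contra hk
  refine not_finiteRootSystem_of_one_one_eq_one (p := matA q i j k 0) ?_ ?_
    (finiteRootSystem_matA h.aah h.ideal h.finGK h.ne h.qtil_eq h.notMem hkj hk (by simp))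
  · simpa [matA_one_one h.qtil_eq] using hs
  · intro he
    apply hk
    have := congrArg Units.val he
    simp only [matA, Matrix.cons_val_zero, Matrix.cons_val_one, Matrix.cons_val_fin_one, zero_add,
      pow_one, Units.val_mul, Units.val_one] at this
    rw [← this, qtil, qtil]
    ring

theorem orderOf_ne_zero (h : NonzeroPair S I i j) : orderOf (q i i) ≠ 0 := by
  intro h0
  have h2 : q i i ^ 2 ≠ 1 := orderOf_eq_zero_iff'.1 h0 2 two_pos
  refine not_finiteRootSystem_of_infinite_order (q := matA q i j i 0) (i := 0) (j := 1)
    (by decide) h0 ?_ (h.finite_matA h2 (by simp))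
  simpa [qtil, matA] using congrArg Units.val (matA_edge h.qtil_eq 0)

/-- The case `q_{jj}² = 1`. -/
theorem sq_ne_one (h : NonzeroPair S I i j) (hN : 3 ≤ orderOf (q i i))
    (h4 : 4 < orderOf (q i i) + orderOf (q j j)) (h2 : q i i ^ 2 ≠ 1) : q j j ^ 2 ≠ 1 := by
  intro hr
  have hs : (q i i * q j j) ^ 2 = q i i ^ 2 := by rw [mul_pow, hr, mul_one]
  have h11 : matA q i j i 0 1 1 = q i i * q j j := by simp [matA_one_one h.qtil_eq]
  have h00 : matA q i j i 0 0 0 = q i i := rfl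
  have hL0 : 0 < orderOf (q i i * q j j) := by
    have hfin : IsOfFinOrder (q i i) := orderOf_pos_iff.1 (by omega)
    exact orderOf_pos_iff.2 (IsOfFinOrder.of_pow (hs ▸ hfin.pow) two_ne_zero)
  have hL : 3 ≤ orderOf (q i i * q j j) := by
    by_contra! hlt
    apply h2
    rw [← hs, ← orderOf_dvd_iff_pow_eq_one]
    interval_cases orderOf (q i i * q j j) <;> decide
  have hNL : orderOf (q i i) ∣ 2 * orderOf (q i i * q j j) := by
    rw [orderOf_dvd_iff_pow_eq_one, pow_mul, ← hs, ← pow_mul, mul_comm 2, pow_mul,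
      pow_orderOf_eq_one, one_pow]
  have hLN : orderOf (q i i * q j j) ∣ 2 * orderOf (q i i) := by
    rw [orderOf_dvd_iff_pow_eq_one, pow_mul, hs, ← pow_mul, mul_comm 2, pow_mul,
      pow_orderOf_eq_one, one_pow]
  have h33 : ¬ (orderOf (q i i) = 3 ∧ orderOf (q i i * q j j) = 3) := by
    rintro ⟨e1, e2⟩
    have e3 := pow_orderOf_eq_one (q i i * q j j)
    rw [e2, mul_pow, ← e1, pow_orderOf_eq_one, e1, one_mul, pow_succ, hr, one_mul] at e3
    rw [e3, orderOf_one] at h4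
    omega
  refine not_finiteRootSystem_of_qtil_eq_sq (p := matA q i j i 0) (by rwa [h00]) (by rwa [h11])
    (by rw [h00, matA_edge h.qtil_eq]) (by rw [h11, matA_edge h.qtil_eq, hs]) ?_
    (h.finite_matA h2 (by simp))
  rw [h00, h11]
  generalize orderOf (q i i) = N at *
  generalize orderOf (q i i * q j j) = L at *
  obtain ⟨n, rfl⟩ : ∃ n, N = n + 2 := ⟨N - 2, by omega⟩
  obtain ⟨l, rfl⟩ : ∃ l, L = l + 2 := ⟨L - 2, by omega⟩
  simp only [Nat.add_sub_cancel]
  rcases Nat.lt_or_ge n 2 with hn | hn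
  · have : n = 1 := by omega
    subst this
    omega
  rcases Nat.lt_or_ge l 2 with hl | hl
  · have : l = 1 := by omega
    subst this
    omega
  nlinarith

/-- The case in which neither `q_{ii}` nor `q_{jj}` nor their product squares to `1`. -/
theorem mul_sq_eq_one (h : NonzeroPair S I i j) (hN : 3 ≤ orderOf (q i i))
    (hM : 3 ≤ orderOf (q j j)) : (q i i * q j j) ^ 2 = 1 := by
  by_contra hs
  obtain ⟨a, ha⟩ : ∃ a, orderOf (q i i) = a + 2 := ⟨orderOf (q i i) - 2, by omega⟩
  obtain ⟨b, hb⟩ : ∃ b, orderOf (q j j) = b + 2 := ⟨orderOf (q j j) - 2, by omega⟩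
  have hp : q i i ^ (a + 2) = 1 := ha ▸ pow_orderOf_eq_one _
  have hr : q j j ^ (b + 2) = 1 := hb ▸ pow_orderOf_eq_one _
  have hp' : q i i ^ ((a + 1) * (a + 1)) = q i i := by
    rw [show (a + 1) * (a + 1) = (a + 2) * a + 1 by ring, pow_succ, pow_mul, hp, one_pow, one_mul]
  have hr' : q j j ^ ((b + 1) * (b + 1)) = q j j := by
    rw [show (b + 1) * (b + 1) = (b + 2) * b + 1 by ring, pow_succ, pow_mul, hr, one_pow, one_mul]
  have h00 : matB q i j b a 0 0 0 = q i i * q j j := by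
    simpa [matB, hr'] using bichar_self h.qtil_eq 1 (b + 1)
  have h11 : matB q i j b a 0 1 1 = q i i * q j j := by
    simpa [matB, hp'] using bichar_self h.qtil_eq (a + 1) 1
  refine not_finiteRootSystem_of_affine (p := matB q i j b a 0) (by rw [h00, h11]) (by rwa [h00])
    ?_ (h.finite_matB (by omega) (by omega) (fun t ht => ?_) fun t ht => ?_)
  · rw [h00, matB_edge h.qtil_eq, mul_pow]
    calc q i i ^ 2 * q j j ^ 2 * (q i i ^ (2 * (a + 1)) * q j j ^ (2 * ((b + 1) * (0 + 1))))
        = (q i i ^ (a + 2)) ^ 2 * (q j j ^ (b + 2)) ^ 2 := by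
          rw [mul_mul_mul_comm, ← pow_add, ← pow_add, ← pow_mul, ← pow_mul]
          congr 2 <;> ring
      _ = 1 := by rw [hp, hr]; simp
  · exact pow_ne_one_of_lt_orderOf (by omega) (by omega)
  · exact pow_ne_one_of_lt_orderOf (by omega) (by omega)

/-- The case `q_{ii}q_{jj} = ±1` with `q_{ii}` of order `3`. -/
theorem cube_ne_one (h : NonzeroPair S I i j) (hs : (q i i * q j j) ^ 2 = 1)
    (h2 : q i i ^ 2 ≠ 1) : q i i ^ 3 ≠ 1 := by
  intro h3
  have hr2 : q j j ^ 2 = (q i i ^ 2)⁻¹ := by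
    rw [mul_pow] at hs
    exact eq_inv_of_mul_eq_one_right hs
  refine not_finiteRootSystem_of_one_one_eq_one (p := matA q i j i 1) ?_
    (by rwa [matA_edge h.qtil_eq]) (h.finite_matA h2 ?_)
  · rw [matA_one_one h.qtil_eq, show (1 + 1) * (1 + 1) = 2 * 2 by rfl, pow_mul, hr2, inv_pow,
      ← pow_mul, pow_succ, h3, one_mul, mul_inv_cancel]
  · intro t ht
    obtain rfl : t = 0 := by omega
    rw [zero_add, hr2]
    simpa using h2

/-- The case `q_{ii}q_{jj} = ±1` with `q_{ii}` of order `4`. -/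
theorem pow_four_ne_one (h : NonzeroPair S I i j) (hs : (q i i * q j j) ^ 2 = 1)
    (h2 : q i i ^ 2 ≠ 1) : q i i ^ 4 ≠ 1 := by
  intro h4
  have hr2 : q j j ^ 2 = (q i i ^ 2)⁻¹ := by
    rw [mul_pow] at hs
    exact eq_inv_of_mul_eq_one_right hs
  have hord : orderOf (q i i) = 4 := by
    have := orderOf_eq_prime_pow (p := 2) (n := 1) (x := q i i) (by simpa using h2)
      (by simpa using h4)
    simpa using this
  have h00 : matA q i j i 1 0 0 = q i i := rfl
  have h11 : matA q i j i 1 1 1 = q i i := by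
    rw [matA_one_one h.qtil_eq, show (1 + 1) * (1 + 1) = 2 * 2 by rfl, pow_mul, hr2, inv_pow,
      ← pow_mul, h4, inv_one, mul_one]
  refine not_finiteRootSystem_of_qtil_eq_sq (p := matA q i j i 1) (by rw [h00]; omega)
    (by rw [h11]; omega) (by rw [h00, matA_edge h.qtil_eq]) (by rw [h11, matA_edge h.qtil_eq])
    (by rw [h00, h11, hord]) (h.finite_matA h2 ?_)
  intro t ht
  obtain rfl : t = 0 := by omega
  rw [zero_add, hr2]
  simpa using h2

/-- The remaining case, in which `q_{ii}q_{jj} = ±1`. -/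
theorem mul_sq_ne_one (h : NonzeroPair S I i j) (h2 : q i i ^ 2 ≠ 1) (h2' : q j j ^ 2 ≠ 1) :
    (q i i * q j j) ^ 2 ≠ 1 := by
  intro hs
  have hs' : (q j j * q i i) ^ 2 = 1 := by rwa [mul_comm]
  have h3' : q j j ^ 3 ≠ 1 := h.symm.cube_ne_one hs' h2'
  have h4 : q i i ^ 4 ≠ 1 := h.pow_four_ne_one hs h2
  have h4' : q j j ^ 4 ≠ 1 := h.symm.pow_four_ne_one hs' h2'
  have hs4 : q i i ^ 4 * q j j ^ 4 = 1 := by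
    rw [← mul_pow, show (4 : ℕ) = 2 * 2 by rfl, pow_mul, hs, one_pow]
  have key : ∀ b, 1 < b → b < 4 → q j j ^ (4 * b) = 1 := by
    intro b hb hb4
    by_contra hne
    refine not_finiteRootSystem_of_one_one_eq_one (p := matB q i j b 1 1) ?_ ?_
      (h.finite_matB le_rfl hb (fun t ht => ?_) fun t ht => ?_)
    · exact (bichar_self h.qtil_eq 2 2).trans hs4
    · rw [matB_edge h.qtil_eq, show 2 * ((b + 1) * (1 + 1)) = 4 + 4 * b by ring, pow_add,
        ← mul_assoc, show 2 * (1 + 1) = 4 by rfl, hs4, one_mul]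
      exact hne
    · obtain rfl : t = 0 := by omega
      exact h2
    · have : t < 3 := by omega
      interval_cases t
      exacts [h2', h3', h4']
  have h12 := key 3 (by norm_num) (by norm_num)
  rw [show 4 * 3 = 4 * 2 + 4 by rfl, pow_add, key 2 (by norm_num) (by norm_num), one_mul] at h12
  exact h4' h12

theorem add_le_four_of_three_le (h : NonzeroPair S I i j) (hN : 3 ≤ orderOf (q i i)) :
    orderOf (q i i) + orderOf (q j j) ≤ 4 := by
  by_contra! h4
  have h2 : q i i ^ 2 ≠ 1 := pow_ne_one_of_lt_orderOf (by omega) (by omega)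
  have h2' : q j j ^ 2 ≠ 1 := h.sq_ne_one hN h4 h2
  have hM : 3 ≤ orderOf (q j j) := by
    by_contra! hlt
    apply h2'
    rw [← orderOf_dvd_iff_pow_eq_one]
    have := h.symm.orderOf_ne_zero
    interval_cases orderOf (q j j)
    · exact absurd rfl this
    all_goals decide
  exact h.mul_sq_ne_one h2 h2' (h.mul_sq_eq_one hN hM)

theorem add_le_four (h : NonzeroPair S I i j) : orderOf (q i i) + orderOf (q j j) ≤ 4 := by
  by_contra! h4
  rcases Nat.lt_or_ge (orderOf (q i i)) 3 with hN | hN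
  · have := h.symm.add_le_four_of_three_le (by omega)
    omega
  · have := h.add_le_four_of_three_le hN
    omega

end NonzeroPair

end Cases

/-- Lemma 3.1(a): if `c_{ij} = 0` (equivalently `q̃_{ij} = 1`) and either
`ord q_{ii} + ord q_{jj} > 4`, or `q_{ii}q_{jj} = 1` and there is `k ∉ {i,j}` with
`q̃_{ik}q̃_{jk} ≠ 1`, then `x_{ij} = 0` in every finite-GKdim pre-Nichols algebra of `q`. -/
theorem statement_2 (θ : ℕ) (q : Fin θ → Fin θ → ℂˣ) (S : BraidedStr θ q)
    (hconn : (dynkin q).Connected)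
    (hfd : FiniteDimensional ℂ (TV θ ⧸ Jq S))
    (hAAH : AAH)
    (I : Submodule ℂ (TV θ)) (hI : IsPreNicholsIdeal S I) (hGK : FinGK I)
    (i j : Fin θ) (hij : i ≠ j)
    (hc : qtil q i j = 1)
    (hyp : 4 < orderOf (q i i) + orderOf (q j j) ∨
      ((q i i : ℂ) * (q j j : ℂ) = 1 ∧
        ∃ k : Fin θ, k ≠ i ∧ k ≠ j ∧ qtil q i k * qtil q j k ≠ 1)) :
    xw q [i, j] ∈ I := by
  by_contra hx
  have h : NonzeroPair S I i j := ⟨hAAH, hI, hGK, hij, hc, hx⟩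
  rcases hyp with h4 | ⟨hs, k, -, hkj, hk⟩
  · exact h4.not_ge h.add_le_four
  · exact hk (h.qtil_mul_qtil_eq_one (Units.ext (by simpa using hs)) hkj)

end PreNicholsPaper
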